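/- Over an algebraically closed field K of characteristic 2, the K-vector space dimensions of the second Hochschild cohomology groups of A₁ and A₂ differ: dim_K HH²(A₁) ≠ dim_K HH²(A₂). -/

import Mathlib

/-!  The quiver `Q` of type `D₄`: vertices `1, 2, 3, 4` and arrows
`α : 1 → 4`, `β : 4 → 1`, `γ : 3 → 4`, `δ : 4 → 3`, `ε : 4 → 2`, `ξ : 2 → 4`.
The path algebra `KQ` is presented as the quotient of the free algebra on the
four vertex idempotents `e1, e2, e3, e4` and the six arrows, by the standard
path-algebra relations (orthogonal idempotents summing to `1`, and each arrow
`a : v → w` satisfying `e_v * a = a = a * e_w`, paths being written from left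
to right). -/

/-- Generators of the path algebra: the four vertices and the six arrows. -/
inductive QGen : Type
  | e1 | e2 | e3 | e4 | α | β | γ | δ | ε | ξ
  deriving DecidableEq

namespace PathAlgD4

open QGen

/-- The source vertex of each arrow. -/
def src : QGen → QGen
  | .α => .e1 | .β => .e4 | .γ => .e3 | .δ => .e4 | .ε => .e4 | .ξ => .e2
  | v => v

/-- The target vertex of each arrow. -/
def tgt : QGen → QGen
  | .α => .e4 | .β => .e1 | .γ => .e4 | .δ => .e3 | .ε => .e2 | .ξ => .e4
  | v => v

/-- The generator `g` is a vertex. -/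
def IsVertex (g : QGen) : Prop := g = .e1 ∨ g = .e2 ∨ g = .e3 ∨ g = .e4

/-- The generator `g` is an arrow. -/
def IsArrow (g : QGen) : Prop := g = .α ∨ g = .β ∨ g = .γ ∨ g = .δ ∨ g = .ε ∨ g = .ξ

variable (K : Type) [Field K]

/-- The defining relations of the path algebra of the quiver `Q`, as a quotient
of the free algebra on the vertices and arrows. -/
inductive PathRel : FreeAlgebra K QGen → FreeAlgebra K QGen → Prop
  | vertex_mul (v w : QGen) (hv : IsVertex v) (hw : IsVertex w) :
      PathRel (FreeAlgebra.ι K v * FreeAlgebra.ι K w)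
        (if v = w then FreeAlgebra.ι K v else 0)
  | vertex_sum :
      PathRel (FreeAlgebra.ι K .e1 + FreeAlgebra.ι K .e2 +
        FreeAlgebra.ι K .e3 + FreeAlgebra.ι K .e4) 1
  | src_mul (a : QGen) (ha : IsArrow a) :
      PathRel (FreeAlgebra.ι K (src a) * FreeAlgebra.ι K a) (FreeAlgebra.ι K a)
  | mul_tgt (a : QGen) (ha : IsArrow a) :
      PathRel (FreeAlgebra.ι K a * FreeAlgebra.ι K (tgt a)) (FreeAlgebra.ι K a)
  | orth_mul (v a : QGen) (hv : IsVertex v) (ha : IsArrow a) (h : v ≠ src a) :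
      PathRel (FreeAlgebra.ι K v * FreeAlgebra.ι K a) 0
  | mul_orth (a v : QGen) (ha : IsArrow a) (hv : IsVertex v) (h : v ≠ tgt a) :
      PathRel (FreeAlgebra.ι K a * FreeAlgebra.ι K v) 0

/-- The path algebra `KQ` of the quiver `Q` over `K`. -/
abbrev PathAlg : Type := RingQuot (PathRel K)

/-- The image in the path algebra `KQ` of a generator (vertex or arrow). -/
noncomputable def gen (g : QGen) : PathAlg K :=
  RingQuot.mkAlgHom K (PathRel K) (FreeAlgebra.ι K g)


open scoped TensorProduct
open CategoryTheory

variable (K : Type) [Field K]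

/-- The two-sided ideal `I′` of `KQ` generated by `αβ, ξε, γδ, βα + δγ + εξ`
(paths written from left to right). -/
noncomputable def idealA1 : TwoSidedIdeal (PathAlg K) :=
  TwoSidedIdeal.span
    {gen K .α * gen K .β,
     gen K .ξ * gen K .ε,
     gen K .γ * gen K .δ,
     gen K .β * gen K .α + gen K .δ * gen K .γ + gen K .ε * gen K .ξ}

/-- The preprojective algebra `A₁ = KQ/I′` of type `D₄`. -/
abbrev AlgA1 : Type := (idealA1 K).ringCon.Quotient

noncomputable instance : Algebra K (AlgA1 K) :=
  Algebra.mk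
    (show K →+* AlgA1 K from
      (RingCon.mk' (idealA1 K).ringCon).comp (algebraMap K (PathAlg K)))
    (fun k x => by
      induction x using Quotient.ind'
      exact congrArg Quotient.mk'' (Algebra.commutes k _))
    (fun k x => by
      induction x using Quotient.ind'
      exact congrArg Quotient.mk'' (Algebra.smul_def k _))

/-- The two-sided ideal `I` of `KQ` generated by
`αβ − αδγβ, ξε, γδ, βα + δγ + εξ, αβα, βαβ` (paths written from left to right). -/
noncomputable def idealA2 : TwoSidedIdeal (PathAlg K) :=
  TwoSidedIdeal.span
    {gen K .α * gen K .β - gen K .α * gen K .δ * gen K .γ * gen K .β,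
     gen K .ξ * gen K .ε,
     gen K .γ * gen K .δ,
     gen K .β * gen K .α + gen K .δ * gen K .γ + gen K .ε * gen K .ξ,
     gen K .α * gen K .β * gen K .α,
     gen K .β * gen K .α * gen K .β}

/-- The non-standard algebra `A₂ = KQ/I`. -/
abbrev AlgA2 : Type := (idealA2 K).ringCon.Quotient

noncomputable instance : Algebra K (AlgA2 K) :=
  Algebra.mk
    (show K →+* AlgA2 K from
      (RingCon.mk' (idealA2 K).ringCon).comp (algebraMap K (PathAlg K)))
    (fun k x => by
      induction x using Quotient.ind'
      exact congrArg Quotient.mk'' (Algebra.commutes k _))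
    (fun k x => by
      induction x using Quotient.ind'
      exact congrArg Quotient.mk'' (Algebra.smul_def k _))

/-- The second Hochschild cohomology group `HH²(Λ) = Ext²_{Λ ⊗[K] Λᵐᵒᵖ}(Λ, Λ)` of a
`K`-algebra `Λ`, as a `K`-vector space; `Λ` is regarded as a module over its enveloping
algebra `Λ ⊗[K] Λᵐᵒᵖ` via `(a ⊗ bᵒᵖ) • m = a * m * b`. -/
noncomputable def HH2 (A : Type) [Ring A] [Algebra K A] : ModuleCat K :=
  letI : Module (A ⊗[K] Aᵐᵒᵖ) A := TensorProduct.Algebra.module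
  ((Ext K (ModuleCat (A ⊗[K] Aᵐᵒᵖ)) 2).obj
    (Opposite.op (ModuleCat.of (A ⊗[K] Aᵐᵒᵖ) A))).obj (ModuleCat.of (A ⊗[K] Aᵐᵒᵖ) A)

section Helper
set_option linter.all false
open CategoryTheory CategoryTheory.Limits
open scoped TensorProduct


section Res
universe v u
variable {C : Type u} [Category.{v} C] [Abelian C] [EnoughProjectives C]

noncomputable def resSucc (S : ShortComplex C) :
    Σ' (X₃ : C) (d₂ : X₃ ⟶ S.X₁), d₂ ≫ S.f = 0 :=
  ⟨Projective.syzygies S.f, Projective.d S.f, by exact (Category.assoc (Projective.π (kernel S.f)) (kernel.ι S.f) S.f).trans (by rw [kernel.condition, comp_zero]; rfl)⟩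

noncomputable def resCplx {P0 P1 P2 : C} (d1 : P1 ⟶ P0) (d2 : P2 ⟶ P1) (w : d2 ≫ d1 = 0) :
    ChainComplex C ℕ :=
  ChainComplex.mk P0 P1 P2 d1 d2 w resSucc

variable {X P0 P1 P2 : C} (d0 : P0 ⟶ X) (d1 : P1 ⟶ P0) (d2 : P2 ⟶ P1)
  (w0 : d1 ≫ d0 = 0) (w : d2 ≫ d1 = 0)

lemma resCplx_d10 : (resCplx d1 d2 w).d 1 0 = d1 := by
  unfold resCplx; exact ChainComplex.mk_d_1_0 ..

lemma resCplx_d21 : (resCplx d1 d2 w).d 2 1 = d2 := by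
  unfold resCplx; exact ChainComplex.mk_d_2_1 ..

lemma resCplx_exact_two (n : ℕ) : (resCplx d1 d2 w).ExactAt (n + 2) := by
  rw [HomologicalComplex.exactAt_iff' _ (n + 3) (n + 2) (n+1) (by simp) (by simp)]
  have h := ChainComplex.mk_d P0 P1 P2 d1 d2 w resSucc n
  refine (ShortComplex.exact_iff_of_iso ?_).2 (CategoryTheory.exact_d_f ((resCplx d1 d2 w).d (n+2) (n+1)))
  exact ShortComplex.isoMk (ChainComplex.mkXIso P0 P1 P2 d1 d2 w resSucc n) (Iso.refl _) (Iso.refl _)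
    (by exact h.symm.trans (Category.comp_id _).symm) (by exact (Category.id_comp _).trans (Category.comp_id _).symm)

lemma resCplx_exact_one (e1 : (ShortComplex.mk d2 d1 w).Exact) : (resCplx d1 d2 w).ExactAt 1 := by
  rw [HomologicalComplex.exactAt_iff' _ 2 1 0 (by simp) (by simp)]
  refine (ShortComplex.exact_iff_of_iso ?_).2 e1
  exact ShortComplex.isoMk (Iso.refl _) (Iso.refl _) (Iso.refl _)
    (by exact ((Category.id_comp _).trans (resCplx_d21 d1 d2 w).symm).trans (Category.comp_id _).symm)
    (by exact ((Category.id_comp _).trans (resCplx_d10 d1 d2 w).symm).trans (Category.comp_id _).symm)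

lemma resCplx_proj [Projective P0] [Projective P1] [Projective P2] (n : ℕ) :
    Projective ((resCplx d1 d2 w).X n) := by
  match n with
  | 0 => exact ‹Projective P0›
  | 1 => exact ‹Projective P1›
  | 2 => exact ‹Projective P2›
  | n+3 =>
    exact Projective.of_iso (ChainComplex.mkXIso P0 P1 P2 d1 d2 w resSucc n).symm
      (Projective.projective_over _)

noncomputable def resRes [Projective P0] [Projective P1] [Projective P2]
    (e0 : (ShortComplex.mk d1 d0 w0).Exact) [Epi d0]
    (e1 : (ShortComplex.mk d2 d1 w).Exact) : ProjectiveResolution X where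
  complex := resCplx d1 d2 w
  projective := resCplx_proj d1 d2 w
  π := (ChainComplex.toSingle₀Equiv _ _).symm ⟨d0, by rw [resCplx_d10]; exact w0⟩
  quasiIso := ⟨fun n => by
    rcases n with _ | n
    · rw [ChainComplex.quasiIsoAt₀_iff, ShortComplex.quasiIso_iff_of_zeros']
      · refine (ShortComplex.exact_and_epi_g_iff_of_iso ?_).2
          ⟨e0, ‹Epi d0›⟩
        refine ShortComplex.isoMk (Iso.refl _) (Iso.refl _) (Iso.refl _) ?_ ?_
        · exact ((Category.id_comp _).trans (resCplx_d10 d1 d2 w).symm).trans (Category.comp_id _).symm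
        · refine (Category.id_comp _).trans ?_
          refine Eq.trans ?_ (Category.comp_id _).symm
          symm
          exact ChainComplex.toSingle₀Equiv_symm_apply_f_zero _ _
      all_goals rfl
    · rw [quasiIsoAt_iff_exactAt']
      · rcases n with _ | n
        · exact resCplx_exact_one d1 d2 w e1
        · exact resCplx_exact_two d1 d2 w n
      · apply ChainComplex.exactAt_succ_single_obj⟩

end Res


section Bar
variable (K : Type) [Field K] (A : Type) [Ring A] [Algebra K A]

abbrev Env := A ⊗[K] Aᵐᵒᵖ

noncomputable abbrev envMod : Module (Env K A) A := TensorProduct.Algebra.module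

attribute [local instance] envMod

instance envTower : IsScalarTower K (Env K A) A where
  smul_assoc k r a := by
    induction r using TensorProduct.induction_on with
    | zero => 
      rw [smul_zero]
      exact (zero_smul (Env K A) a).trans
        ((congrArg (k • ·) (zero_smul (Env K A) a)).trans (smul_zero k)).symm
    | tmul x y => 
      rw [TensorProduct.smul_tmul']
      simp [TensorProduct.Algebra.smul_def]
    | add x y hx hy => rw [smul_add, add_smul, add_smul, smul_add, hx, hy]

lemma env_smul (a b m : A) : ((a ⊗ₜ[K] MulOpposite.op b : Env K A) • m) = a * m * b := by
  rw [TensorProduct.Algebra.smul_def]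
  simp [mul_assoc]

instance envComm : SMulCommClass (Env K A) K A where
  smul_comm r k a := by
    rw [← algebraMap_smul (Env K A) k a, ← algebraMap_smul (Env K A) k (r • a), smul_smul, smul_smul, Algebra.commutes]

variable {K A}
noncomputable def frExt {N P : Type} [AddCommMonoid N] [Module K N] [AddCommMonoid P] [Module K P]
    [Module (Env K A) P] [IsScalarTower K (Env K A) P] [SMulCommClass (Env K A) K P]
    (g : N →ₗ[K] P) : Env K A ⊗[K] N →ₗ[Env K A] P :=
  TensorProduct.AlgebraTensorModule.lift (LinearMap.toSpanSingleton (Env K A) (N →ₗ[K] P) g)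

lemma frExt_tmul {N P : Type} [AddCommMonoid N] [Module K N] [AddCommMonoid P] [Module K P]
    [Module (Env K A) P] [IsScalarTower K (Env K A) P] [SMulCommClass (Env K A) K P]
    (g : N →ₗ[K] P) (r : Env K A) (n : N) : frExt g (r ⊗ₜ n) = r • g n := rfl

lemma genSmul {R N : Type} [Ring R] [Algebra K R] [AddCommGroup N] [Module K N]
    (r s1 s2 s3 : R) (a b c : N) (t : R ⊗[K] N) (h : t = s1 ⊗ₜ a - s2 ⊗ₜ b + s3 ⊗ₜ c) :
    r • t = (r * s1) ⊗ₜ a - (r * s2) ⊗ₜ b + (r * s3) ⊗ₜ c := by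
  rw [h, smul_add, smul_sub, TensorProduct.smul_tmul', TensorProduct.smul_tmul', TensorProduct.smul_tmul']
  simp

open MulOpposite
variable (K A)
noncomputable def bd0 : Env K A →ₗ[Env K A] A := LinearMap.toSpanSingleton (Env K A) A 1

noncomputable def lft : A →ₗ[K] Env K A := (TensorProduct.mk K A Aᵐᵒᵖ).flip 1
noncomputable def rgt : A →ₗ[K] Env K A := (TensorProduct.mk K A Aᵐᵒᵖ 1) ∘ₗ (opLinearEquiv K).toLinearMap

noncomputable def bd1 : Env K A ⊗[K] A →ₗ[Env K A] Env K A := frExt (lft K A - rgt K A)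

/-- `a ⊗ b ↦ a[b] - [ab] + [a]b`. -/
noncomputable def bd2aux : A →ₗ[K] A →ₗ[K] Env K A ⊗[K] A :=
  LinearMap.mk₂ K (fun a b => lft K A a ⊗ₜ b - 1 ⊗ₜ (a * b) + rgt K A b ⊗ₜ a)
    (fun a a' b => by simp only [map_add, add_mul, TensorProduct.add_tmul, TensorProduct.tmul_add]; abel)
    (fun k a b => by simp only [map_smul, smul_mul_assoc, TensorProduct.tmul_smul, smul_add, smul_sub, TensorProduct.smul_tmul'])
    (fun a b b' => by simp only [map_add, mul_add, TensorProduct.add_tmul, TensorProduct.tmul_add]; abel)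
    (fun k a b => by simp only [map_smul, mul_smul_comm, TensorProduct.tmul_smul, smul_add, smul_sub, TensorProduct.smul_tmul'])

noncomputable def bd2 : Env K A ⊗[K] (A ⊗[K] A) →ₗ[Env K A] Env K A ⊗[K] A :=
  frExt (TensorProduct.lift (bd2aux K A))

lemma bd0_apply (a b : A) : bd0 K A (a ⊗ₜ op b) = a * b := by
  show (a ⊗ₜ[K] op b : Env K A) • (1 : A) = _
  rw [env_smul]; simp

lemma bd1_apply (p q a : A) : bd1 K A ((p ⊗ₜ op q) ⊗ₜ a) = (p * a) ⊗ₜ op q - p ⊗ₜ op (a * q) := by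
  unfold bd1; rw [frExt_tmul]
  simp [lft, rgt, mul_sub]

lemma bd2_apply (p q a b : A) : bd2 K A ((p ⊗ₜ op q) ⊗ₜ (a ⊗ₜ b)) =
   ((p * a) ⊗ₜ op q) ⊗ₜ b - (p ⊗ₜ op q) ⊗ₜ (a * b) + (p ⊗ₜ op (b * q)) ⊗ₜ a := by
  unfold bd2; rw [frExt_tmul]
  have h : TensorProduct.lift (bd2aux K A) (a ⊗ₜ b) =
    (a ⊗ₜ[K] (1 : Aᵐᵒᵖ) : Env K A) ⊗ₜ[K] b - (1 : Env K A) ⊗ₜ[K] (a * b)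
    + ((1 : A) ⊗ₜ[K] op b : Env K A) ⊗ₜ[K] a := rfl
  refine (genSmul (p ⊗ₜ[K] op q : Env K A) _ _ _ _ _ _ _ h).trans ?_
  simp
/-- Induction on pure tensors. -/
lemma env_ind {P : Env K A → Prop} (x : Env K A) (h : ∀ a b, P (a ⊗ₜ op b)) (h0 : P 0)
    (ha : ∀ x y, P x → P y → P (x + y)) : P x := by
  induction x using TensorProduct.induction_on with
  | zero => exact h0
  | tmul x y => exact h x y.unop
  | add x y hx hy => exact ha _ _ hx hy

lemma bd01 : bd0 K A ∘ₗ bd1 K A = 0 := by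
  refine LinearMap.ext fun x => ?_
  simp only [LinearMap.zero_apply, LinearMap.comp_apply]
  induction x using TensorProduct.induction_on with
  | zero => simp
  | add x y hx hy => rw [map_add, map_add, hx, hy, add_zero]
  | tmul x a =>
    induction x using env_ind with
    | h p q => rw [bd1_apply, map_sub, bd0_apply, bd0_apply]; simp [mul_assoc]
    | h0 => simp
    | ha x y hx hy => rw [TensorProduct.add_tmul, map_add, map_add, hx, hy, add_zero]

lemma bd12 : bd1 K A ∘ₗ bd2 K A = 0 := by
  refine LinearMap.ext fun x => ?_
  simp only [LinearMap.zero_apply, LinearMap.comp_apply]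
  induction x using TensorProduct.induction_on with
  | zero => simp
  | add x y hx hy => rw [map_add, map_add, hx, hy, add_zero]
  | tmul x a =>
    induction a using TensorProduct.induction_on with
    | zero => simp
    | add a b hx hy => rw [TensorProduct.tmul_add, map_add, map_add, hx, hy, add_zero]
    | tmul a b =>
    induction x using env_ind with
    | h p q => rw [bd2_apply, map_add, map_sub, bd1_apply, bd1_apply, bd1_apply]; simp [mul_assoc]
    | h0 => simp
    | ha x y hx hy => rw [TensorProduct.add_tmul, map_add, map_add, hx, hy, add_zero]

lemma ex0 (x : Env K A) (hx : bd0 K A x = 0) : ∃ y, bd1 K A y = x := by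
  let s : Env K A →ₗ[K] Env K A ⊗[K] A :=
    TensorProduct.lift (((TensorProduct.mk K (Env K A) A) ∘ₗ rgt K A).flip ∘ₗ LinearMap.id |>.compl₂ (opLinearEquiv K).symm.toLinearMap)
  have hs : ∀ x, bd1 K A (s x) = x - rgt K A (bd0 K A x) := by
    intro x
    induction x using env_ind with
    | h p q =>
      rw [bd0_apply]
      have : s (p ⊗ₜ op q) = (1 ⊗ₜ op q) ⊗ₜ p := by simp [s, rgt]
      rw [this, bd1_apply]; simp [rgt]
    | h0 => simp
    | ha x y hx hy => simp only [map_add, hx, hy]; abel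
  exact ⟨s x, by rw [hs, hx]; simp⟩

lemma ex1 (x : Env K A ⊗[K] A) (hx : bd1 K A x = 0) : ∃ y, bd2 K A y = x := by
  let s0 : Env K A →ₗ[K] A →ₗ[K] Env K A ⊗[K] (A ⊗[K] A) :=
    TensorProduct.lift
      { toFun := fun p =>
        { toFun := fun q => (TensorProduct.mk K (Env K A) (A ⊗[K] A) (1 ⊗ₜ q)) ∘ₗ TensorProduct.mk K A A p
          map_add' := fun q q' => by ext a; simp [TensorProduct.tmul_add, TensorProduct.add_tmul]
          map_smul' := fun k q => by ext a; simp [TensorProduct.smul_tmul'] }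
        map_add' := fun q q' => by ext a; simp [TensorProduct.tmul_add, TensorProduct.add_tmul]
        map_smul' := fun k q => by ext a; simp [← TensorProduct.smul_tmul', -TensorProduct.smul_tmul'] }
  let s : Env K A ⊗[K] A →ₗ[K] Env K A ⊗[K] (A ⊗[K] A) := TensorProduct.lift s0
  let t : Env K A →ₗ[K] Env K A ⊗[K] A :=
    TensorProduct.lift (((TensorProduct.mk K (Env K A) A) ∘ₗ rgt K A).flip ∘ₗ LinearMap.id |>.compl₂ (opLinearEquiv K).symm.toLinearMap)
  have ht : ∀ p q, t (p ⊗ₜ op q) = (1 ⊗ₜ op q) ⊗ₜ p := fun p q => by simp [t, rgt]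
  have hs : ∀ x, bd2 K A (s x) = x - t (bd1 K A x) := by
    intro x
    induction x using TensorProduct.induction_on with
    | zero => simp
    | add x y hx hy => simp only [map_add, hx, hy]; abel
    | tmul x a =>
      induction x using env_ind with
      | h p q =>
        have : s ((p ⊗ₜ op q) ⊗ₜ a) = (1 ⊗ₜ op q) ⊗ₜ (p ⊗ₜ a) := by simp [s, s0]
        rw [this, bd2_apply, bd1_apply, map_sub, ht, ht]; simp; abel
      | h0 => simp
      | ha x y hx hy => simp only [TensorProduct.add_tmul, map_add, hx, hy]; abel
  exact ⟨s x, by rw [hs, hx]; simp⟩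

end Bar

section ExtC
universe v u
variable {C : Type u} [Category.{v} C] [Abelian C] [EnoughProjectives C] {K : Type} [Field K] [Linear K C]
variable {X P0 P1 P2 : C} (d0 : P0 ⟶ X) (d1 : P1 ⟶ P0) (d2 : P2 ⟶ P1)
  (w0 : d1 ≫ d0 = 0) (w : d2 ≫ d1 = 0)

/-- Two-cocycles with values in `Y`. -/
def zSub (Y : C) : Submodule K (P2 ⟶ Y) where
  carrier := {φ | kernel.ι d2 ≫ φ = 0}
  add_mem' := fun {a b} ha hb => by
    change kernel.ι d2 ≫ (a + b) = 0
    rw [Preadditive.comp_add, show kernel.ι d2 ≫ a = 0 from ha, show kernel.ι d2 ≫ b = 0 from hb, add_zero]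
  zero_mem' := by simp
  smul_mem' := fun k a ha => by
    change kernel.ι d2 ≫ (k • a) = 0
    rw [Linear.comp_smul, show kernel.ι d2 ≫ a = 0 from ha, smul_zero]

lemma exact_ker_iff (S : ShortComplex C) (h : S.Exact) {Y : C} (φ : S.X₂ ⟶ Y) :
    S.f ≫ φ = 0 ↔ kernel.ι S.g ≫ φ = 0 := by
  have he := h.epi_kernelLift
  have hl := kernel.lift_ι S.g S.f S.zero
  constructor
  · intro h1
    rw [← cancel_epi (kernel.lift S.g S.f S.zero), kernel.lift_ι_assoc, comp_zero]; exact h1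
  · intro h1
    rw [← hl, Category.assoc, h1, comp_zero]

lemma resCplx_ker_iff {Y : C} (φ : P2 ⟶ Y) :
    (resCplx d1 d2 w).d 3 2 ≫ (show (resCplx d1 d2 w).X 2 ⟶ Y from φ) = 0 ↔ kernel.ι d2 ≫ φ = 0 := by
  have h := resCplx_exact_two d1 d2 w 0
  rw [HomologicalComplex.exactAt_iff' _ 3 2 1 (by simp) (by simp)] at h
  have h5 := exact_ker_iff _ h (show (resCplx d1 d2 w).X 2 ⟶ Y from φ)
  refine h5.trans ?_
  have : ∀ d : P2 ⟶ P1, d = d2 → (kernel.ι d ≫ φ = 0 ↔ kernel.ι d2 ≫ φ = 0) := by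
    rintro d rfl; rfl
  exact this _ (resCplx_d21 d1 d2 w)

theorem ext_pres [Projective P0] [Projective P1] [Projective P2]
    (e0 : (ShortComplex.mk d1 d0 w0).Exact) [Epi d0]
    (e1 : (ShortComplex.mk d2 d1 w).Exact) (Y : C) :
    ∃ q : (zSub (K := K) d2 Y) →ₗ[K] (((Ext K C 2).obj (Opposite.op X)).obj Y),
      Function.Surjective q ∧ ∀ φ, q φ = 0 ↔ ∃ ψ : P1 ⟶ Y, d2 ≫ ψ = φ.1 := by
  let P := resRes d0 d1 d2 w0 w e0 e1
  let S := (P.complex.linearYonedaObj K Y).sc' 1 2 3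
  let i : ((Ext K C 2).obj (Opposite.op X)).obj Y ≅ S.moduleCatLeftHomologyData.H :=
    P.isoExt 2 Y ≪≫ (P.complex.linearYonedaObj K Y).homologyIsoSc' 1 2 3 (by simp) (by simp)
      ≪≫ S.moduleCatHomologyIso
  let e : (zSub (K := K) d2 Y) ≃ₗ[K] LinearMap.ker S.g.hom :=
    { toFun := fun φ => ⟨φ.1, (resCplx_ker_iff d1 d2 w φ.1).2 φ.2⟩
      invFun := fun φ => ⟨φ.1, (resCplx_ker_iff d1 d2 w φ.1).1 φ.2⟩
      map_add' := fun _ _ => rfl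
      map_smul' := fun _ _ => rfl
      left_inv := fun _ => rfl
      right_inv := fun _ => rfl }
  let m := (LinearMap.range S.moduleCatToCycles).mkQ
  let j : (LinearMap.ker S.g.hom ⧸ LinearMap.range S.moduleCatToCycles) ≃ₗ[K]
    (((Ext K C 2).obj (Opposite.op X)).obj Y) := i.symm.toLinearEquiv
  refine ⟨j.toLinearMap ∘ₗ m ∘ₗ e.toLinearMap, ?_, ?_⟩
  · exact j.surjective.comp ((Submodule.mkQ_surjective _).comp e.surjective)
  · intro φ
    have h1 : (j.toLinearMap ∘ₗ m ∘ₗ e.toLinearMap) φ = 0 ↔ m (e φ) = 0 := j.map_eq_zero_iff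
    rw [h1, Submodule.mkQ_apply, Submodule.Quotient.mk_eq_zero]
    constructor
    · rintro ⟨ψ, hψ⟩
      refine ⟨ψ, ?_⟩
      have h2 := congrArg (fun d : P2 ⟶ P1 => d ≫ (show P1 ⟶ Y from ψ)) (resCplx_d21 d1 d2 w)
      exact h2.symm.trans (congrArg Subtype.val hψ)
    · rintro ⟨ψ, hψ⟩
      refine ⟨ψ, Subtype.ext ?_⟩
      have h2 := congrArg (fun d : P2 ⟶ P1 => d ≫ ψ) (resCplx_d21 d1 d2 w)
      exact h2.trans hψ
end ExtC

section ExtM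
variable {K : Type} [Field K] {R : Type} [Ring R] [Algebra K R]
  {X M0 M1 M2 Y F : Type} [AddCommGroup X] [Module R X] [AddCommGroup M0] [Module R M0]
  [AddCommGroup M1] [Module R M1] [AddCommGroup M2] [Module R M2] [AddCommGroup Y] [Module R Y]
  [AddCommMonoid F] [Module K F]

theorem ext_mod [Module.Projective R M0] [Module.Projective R M1] [Module.Projective R M2]
    (d0 : M0 →ₗ[R] X) (d1 : M1 →ₗ[R] M0) (d2 : M2 →ₗ[R] M1)
    (w0 : d0 ∘ₗ d1 = 0) (w1 : d1 ∘ₗ d2 = 0) (s0 : Function.Surjective d0)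
    (e0 : ∀ x, d0 x = 0 → ∃ y, d1 y = x) (e1 : ∀ x, d1 x = 0 → ∃ y, d2 y = x)
    (c : F → (M2 →ₗ[R] Y)) (cadd : ∀ f g, c (f + g) = c f + c g)
    (csmul : ∀ (k : K) f x, c (k • f) x = algebraMap K R k • c f x)
    (cz : ∀ f x, d2 x = 0 → c f x = 0)
    (cs : ∀ φ : M2 →ₗ[R] Y, (∀ x, d2 x = 0 → φ x = 0) → ∃ f, c f = φ) :
    ∃ q : F →ₗ[K] ((Ext K (ModuleCat R) 2).obj
        (Opposite.op (ModuleCat.of R X))).obj (ModuleCat.of R Y),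
      Function.Surjective q ∧ ∀ f, q f = 0 ↔ ∃ ψ : M1 →ₗ[R] Y, ψ ∘ₗ d2 = c f := by
  have : Epi (ModuleCat.ofHom d0) := (ModuleCat.epi_iff_surjective _).2 s0
  have W0 : ModuleCat.ofHom d1 ≫ ModuleCat.ofHom d0 = 0 := by
    rw [← ModuleCat.ofHom_comp, w0]; rfl
  have W1 : ModuleCat.ofHom d2 ≫ ModuleCat.ofHom d1 = 0 := by
    rw [← ModuleCat.ofHom_comp, w1]; rfl
  have E0 : (ShortComplex.mk _ _ W0).Exact := by
    rw [ShortComplex.moduleCat_exact_iff]; exact e0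
  have E1 : (ShortComplex.mk _ _ W1).Exact := by
    rw [ShortComplex.moduleCat_exact_iff]; exact e1
  obtain ⟨q, hq, hq2⟩ := ext_pres (K := K) _ _ _ W0 W1 E0 E1 (ModuleCat.of R Y)
  have hker : ∀ φ : M2 →ₗ[R] Y, kernel.ι (ModuleCat.ofHom d2) ≫ ModuleCat.ofHom φ = 0 ↔
      ∀ x, d2 x = 0 → φ x = 0 := by
    intro φ
    constructor
    · intro h x hx
      let l : ModuleCat.of R (LinearMap.ker d2) ⟶ ModuleCat.of R M2 := ModuleCat.ofHom (LinearMap.ker d2).subtype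
      have hl : l ≫ ModuleCat.ofHom d2 = 0 := by
        ext y; exact y.2
      have h2 : l ≫ ModuleCat.ofHom φ = 0 := by
        rw [← kernel.lift_ι _ l hl, Category.assoc, h, comp_zero]
      exact congrArg (fun z => z.hom (⟨x, hx⟩ : LinearMap.ker d2)) h2
    · intro h
      ext y
      refine h _ ?_
      exact congrArg (fun z => z.hom y) (kernel.condition (ModuleCat.ofHom d2))
  let j : F →ₗ[K] zSub (K := K) (ModuleCat.ofHom d2) (ModuleCat.of R Y) :=
    { toFun := fun f => ⟨ModuleCat.ofHom (c f), (hker _).2 (cz f)⟩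
      map_add' := fun f g => by
        apply Subtype.ext
        change ModuleCat.ofHom (c (f + g)) = ModuleCat.ofHom (c f) + ModuleCat.ofHom (c g)
        rw [cadd]; rfl
      map_smul' := fun k f => by
        apply Subtype.ext
        change ModuleCat.ofHom (c (k • f)) = k • ModuleCat.ofHom (c f)
        ext x
        exact csmul k f x }
  have hj : Function.Surjective j := by
    rintro ⟨φ, hφ⟩
    obtain ⟨f, hf⟩ := cs φ.hom ((hker φ.hom).1 hφ)
    refine ⟨f, Subtype.ext ?_⟩
    change ModuleCat.ofHom (c f) = φ
    rw [hf]; rfl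
  refine ⟨q ∘ₗ j, hq.comp hj, fun f => (hq2 (j f)).trans ?_⟩
  constructor
  · rintro ⟨ψ, h⟩
    exact ⟨ψ.hom, congrArg ModuleCat.Hom.hom h⟩
  · rintro ⟨ψ, h⟩
    refine ⟨ModuleCat.ofHom ψ, ?_⟩
    change _ = ModuleCat.ofHom (c f)
    rw [← h]; rfl
end ExtM

section Hoch
variable (K : Type) [Field K] (A : Type) [Ring A] [Algebra K A]

/-- Hochschild 2-cocycles. -/
def hZ : Submodule K (A →ₗ[K] A →ₗ[K] A) where
  carrier := {f | ∀ a b c, a * f b c + f a (b * c) = f (a * b) c + f a b * c}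
  add_mem' := fun {f g} hf hg a b c => by
    have h1 := hf a b c
    have h2 := hg a b c
    simp only [LinearMap.add_apply, mul_add, add_mul]
    calc _ = (a * f b c + f a (b * c)) + (a * g b c + g a (b * c)) := by abel
      _ = _ := by rw [h1, h2]; abel
  zero_mem' := fun a b c => by simp
  smul_mem' := fun k f hf a b c => by
    have h1 := hf a b c
    simp only [LinearMap.smul_apply, mul_smul_comm, smul_mul_assoc, ← smul_add, h1]

variable {K A}
attribute [local instance] envMod
open MulOpposite

lemma bar1_ind {P : Env K A ⊗[K] A → Prop} (x : Env K A ⊗[K] A)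
    (h : ∀ p q a, P ((p ⊗ₜ op q) ⊗ₜ a)) (ha : ∀ x y, P x → P y → P (x + y)) : P x := by
  have h0 : P 0 := by simpa using h 0 0 0
  induction x using TensorProduct.induction_on with
  | zero => exact h0
  | add x y hx hy => exact ha _ _ hx hy
  | tmul r n =>
    induction r using env_ind with
    | h p q => exact h p q n
    | h0 => simpa using h0
    | ha x y hx hy => rw [TensorProduct.add_tmul]; exact ha _ _ hx hy

lemma bar2_ind {P : Env K A ⊗[K] (A ⊗[K] A) → Prop} (x : Env K A ⊗[K] (A ⊗[K] A))
    (h : ∀ p q a b, P ((p ⊗ₜ op q) ⊗ₜ (a ⊗ₜ b))) (ha : ∀ x y, P x → P y → P (x + y)) : P x := by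
  have h0 : P 0 := by simpa using h 0 0 0 0
  induction x using TensorProduct.induction_on with
  | zero => exact h0
  | add x y hx hy => exact ha _ _ hx hy
  | tmul r n =>
    induction n using TensorProduct.induction_on with
    | zero => simpa using h0
    | add x y hx hy => rw [TensorProduct.tmul_add]; exact ha _ _ hx hy
    | tmul a b =>
      induction r using env_ind with
      | h p q => exact h p q a b
      | h0 => simpa using h0
      | ha x y hx hy => rw [TensorProduct.add_tmul]; exact ha _ _ hx hy

/-- The bimodule map attached to a bilinear map. -/
noncomputable def hc (f : A →ₗ[K] A →ₗ[K] A) : Env K A ⊗[K] (A ⊗[K] A) →ₗ[Env K A] A :=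
  frExt (TensorProduct.lift f)

lemma hc_apply (f : A →ₗ[K] A →ₗ[K] A) (p q a b : A) :
    hc f ((p ⊗ₜ op q) ⊗ₜ (a ⊗ₜ b)) = p * f a b * q := by
  unfold hc; rw [frExt_tmul, env_smul]; rfl

/-- The bimodule map attached to a linear map. -/
noncomputable def hc1 (f : A →ₗ[K] A) : Env K A ⊗[K] A →ₗ[Env K A] A := frExt f

lemma hc1_apply (f : A →ₗ[K] A) (p q a : A) :
    hc1 f ((p ⊗ₜ op q) ⊗ₜ a) = p * f a * q := by
  unfold hc1; rw [frExt_tmul, env_smul]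

lemma gen_bim_apply {R N P : Type} [Semiring R] [Algebra K R] [AddCommMonoid N] [Module K N]
    [AddCommMonoid P] [Module R P] (φ : R ⊗[K] N →ₗ[R] P) (r : R) (n : N) :
    φ (r ⊗ₜ n) = r • φ (1 ⊗ₜ n) := by
  rw [← map_smul, TensorProduct.smul_tmul', smul_eq_mul, mul_one]

lemma gen_bim_smul {R N P : Type} [Semiring R] [Algebra K R] [AddCommMonoid N] [Module K N]
    [AddCommMonoid P] [Module R P] (φ : R ⊗[K] N →ₗ[R] P) (k : K) (n : N) :
    φ (1 ⊗ₜ (k • n)) = algebraMap K R k • φ (1 ⊗ₜ n) := by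
  rw [← gen_bim_apply, TensorProduct.tmul_smul, TensorProduct.smul_tmul', Algebra.algebraMap_eq_smul_one]

lemma bim_apply {N : Type} [AddCommMonoid N] [Module K N] (φ : Env K A ⊗[K] N →ₗ[Env K A] A) (p q : A) (n : N) :
    φ ((p ⊗ₜ op q) ⊗ₜ n) = p * φ (1 ⊗ₜ n) * q := by
  rw [← env_smul (K := K)]
  exact gen_bim_apply φ _ n

/-- The linear map of a bimodule map. -/
noncomputable def unhc {N : Type} [AddCommMonoid N] [Module K N] (φ : Env K A ⊗[K] N →ₗ[Env K A] A) : N →ₗ[K] A where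
  toFun n := φ (1 ⊗ₜ n)
  map_add' x y := by rw [TensorProduct.tmul_add, map_add]
  map_smul' k x := by
    refine (gen_bim_smul φ k x).trans ?_
    exact algebraMap_smul (Env K A) k _

lemma hc_add (f g : A →ₗ[K] A →ₗ[K] A) : hc (f + g) = hc f + hc g := by
  refine LinearMap.ext fun x => ?_
  induction x using bar2_ind with
  | h p q a b => 
    rw [LinearMap.add_apply, hc_apply, hc_apply, hc_apply, ← add_mul, ← mul_add]; rfl
  | ha x y hx hy => rw [map_add, map_add, hx, hy]

lemma hc_smul (k : K) (f : A →ₗ[K] A →ₗ[K] A) (x) :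
    hc (k • f) x = algebraMap K (Env K A) k • hc f x := by
  induction x using bar2_ind with
  | h p q a b => 
    rw [hc_apply, hc_apply, algebraMap_smul]
    change p * (k • f a b) * q = _
    simp only [mul_smul_comm, smul_mul_assoc]
  | ha x y hx hy => rw [map_add, map_add, hx, hy, smul_add]

lemma hc_ker (f : A →ₗ[K] A →ₗ[K] A) (hf : f ∈ hZ K A) (x : Env K A ⊗[K] (A ⊗[K] A))
    (hx : bd2 K A x = 0) : hc f x = 0 := by
  let Ψ0 : Env K A →ₗ[K] A →ₗ[K] A :=
    TensorProduct.lift (LinearMap.mk₂ K (fun p (q : Aᵐᵒᵖ) => (LinearMap.mulRight K q.unop) ∘ₗ f p)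
      (fun p p' q => by ext a; simp [add_mul])
      (fun k p q => by ext a; simp)
      (fun p q q' => by ext a; simp [mul_add])
      (fun k p q => by ext a; simp))
  let Ψ : Env K A ⊗[K] A →ₗ[K] A := TensorProduct.lift Ψ0
  have hΨ : ∀ p q a, Ψ ((p ⊗ₜ op q) ⊗ₜ a) = f p a * q := fun p q a => rfl
  have key : ∀ y, hc f y = Ψ (bd2 K A y) := by
    intro y
    induction y using bar2_ind with
    | h p q a b =>
      rw [hc_apply, bd2_apply, map_add, map_sub, hΨ, hΨ, hΨ]
      have := hf p a b
      rw [← mul_assoc, ← sub_mul, ← add_mul, sub_add_eq_add_sub, ← this, add_sub_cancel_right]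
    | ha x y hx hy => rw [map_add, map_add, map_add, hx, hy]
  rw [key, hx, map_zero]

lemma hc_surj (φ : Env K A ⊗[K] (A ⊗[K] A) →ₗ[Env K A] A) (hφ : ∀ x, bd2 K A x = 0 → φ x = 0) :
    ∃ f : hZ K A, hc f.1 = φ := by
  refine ⟨⟨TensorProduct.curry (unhc φ), ?_⟩, ?_⟩
  · intro a b c
    have h1 := hφ ((a ⊗ₜ op 1) ⊗ₜ (b ⊗ₜ c) - (1 ⊗ₜ op 1) ⊗ₜ ((a * b) ⊗ₜ c)
      + (1 ⊗ₜ op 1) ⊗ₜ (a ⊗ₜ (b * c)) - (1 ⊗ₜ op c) ⊗ₜ (a ⊗ₜ b)) (by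
        rw [map_sub, map_add, map_sub]
        simp only [bd2_apply, mul_one, one_mul, mul_assoc]
        abel)
    rw [map_sub, map_add, map_sub, bim_apply, bim_apply φ 1 1, bim_apply φ 1 1, bim_apply φ 1 c] at h1
    simp only [mul_one, one_mul] at h1
    change a * φ (1 ⊗ₜ (b ⊗ₜ c)) + φ (1 ⊗ₜ (a ⊗ₜ (b * c))) = φ (1 ⊗ₜ ((a * b) ⊗ₜ c)) + φ (1 ⊗ₜ (a ⊗ₜ b)) * c
    rw [← sub_eq_zero, ← h1]; abel
  · refine LinearMap.ext fun x => ?_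
    induction x using bar2_ind with
    | h p q a b => rw [hc_apply, bim_apply]; rfl
    | ha x y hx hy => rw [map_add, map_add, hx, hy]

lemma hc_bound (f : A →ₗ[K] A →ₗ[K] A) :
    (∃ ψ : Env K A ⊗[K] A →ₗ[Env K A] A, ψ ∘ₗ bd2 K A = hc f) ↔
    ∃ h : A →ₗ[K] A, ∀ a b, f a b = a * h b - h (a * b) + h a * b := by
  constructor
  · rintro ⟨ψ, h⟩
    refine ⟨unhc ψ, fun a b => ?_⟩
    have h3 := congrArg (fun z => z ((1 ⊗ₜ op 1) ⊗ₜ (a ⊗ₜ b))) h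
    simp only [LinearMap.comp_apply] at h3
    rw [hc_apply, bd2_apply, map_add, map_sub, bim_apply, bim_apply ψ 1 1, bim_apply ψ 1] at h3
    simp only [mul_one, one_mul] at h3
    exact h3.symm
  · rintro ⟨h, hh⟩
    refine ⟨hc1 h, LinearMap.ext fun x => ?_⟩
    induction x using bar2_ind with
    | h p q a b =>
      rw [LinearMap.comp_apply, hc_apply, bd2_apply, map_add, map_sub, hc1_apply, hc1_apply, hc1_apply, hh]
      simp only [mul_add, add_mul, mul_sub, sub_mul, mul_assoc]
    | ha x y hx hy => rw [map_add, map_add, hx, hy]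

theorem hh2_pres : ∃ q : hZ K A →ₗ[K] HH2 K A, Function.Surjective q ∧
    ∀ f, q f = 0 ↔ ∃ h : A →ₗ[K] A, ∀ a b, f.1 a b = a * h b - h (a * b) + h a * b := by
  have p1 : Module.Projective (Env K A) (Env K A ⊗[K] A) := inferInstance
  have p2 : Module.Projective (Env K A) (Env K A ⊗[K] (A ⊗[K] A)) := inferInstance
  have main := @ext_mod K _ (Env K A) _ _ A (Env K A) (Env K A ⊗[K] A)
    (Env K A ⊗[K] (A ⊗[K] A)) A (hZ K A) _ _ _ _ _ _ _ _ _ _ _ _ _ p1 p2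
    (bd0 K A) (bd1 K A) (bd2 K A) (bd01 K A) (bd12 K A)
    (fun a => ⟨a ⊗ₜ op 1, by rw [bd0_apply, mul_one]⟩) (ex0 K A) (ex1 K A)
    (fun f => hc f.1)
    (fun f g => hc_add f.1 g.1) (fun k f x => hc_smul k f.1 x) (fun f x hx => hc_ker f.1 f.2 x hx)
    (fun φ hφ => hc_surj φ hφ)
  obtain ⟨q, h1, h2⟩ := main
  exact ⟨q, h1, fun f => (h2 f).trans (hc_bound f.1)⟩

theorem hh2_le {n : ℕ} (Λ : (A →ₗ[K] A →ₗ[K] A) →ₗ[K] (Fin n → K))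
    (h : ∀ f ∈ hZ K A, Λ f = 0 → ∃ h : A →ₗ[K] A, ∀ a b, f a b = a * h b - h (a * b) + h a * b) :
    Module.finrank K (HH2 K A) ≤ n := by
  obtain ⟨q, h1, h2⟩ := hh2_pres (K := K) (A := A)
  let L := Λ ∘ₗ (hZ K A).subtype
  have hk : LinearMap.ker L ≤ LinearMap.ker q := fun f hf => (h2 f).2 (h f.1 f.2 hf)
  obtain ⟨s, hs⟩ := L.rangeRestrict.exists_rightInverse_of_surjective L.range_rangeRestrict
  have hsurj : Function.Surjective (q ∘ₗ s) := by
    intro y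
    obtain ⟨f, rfl⟩ := h1 y
    refine ⟨L.rangeRestrict f, ?_⟩
    have h3 : L.rangeRestrict (s (L.rangeRestrict f)) = L.rangeRestrict f :=
      LinearMap.congr_fun hs _
    have h4 : L (s (L.rangeRestrict f)) = L f := congrArg Subtype.val h3
    have h5 : L (s (L.rangeRestrict f) + (-1 : K) • f) = 0 := by
      rw [map_add, map_smul, h4, neg_one_smul, add_neg_cancel]
    have h6 : q (s (L.rangeRestrict f) + (-1 : K) • f) = 0 := hk h5
    rw [map_add, map_smul, neg_one_smul, add_neg_eq_zero] at h6
    exact h6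
  calc Module.finrank K (HH2 K A) ≤ Module.finrank K (LinearMap.range L) :=
        LinearMap.finrank_le_finrank_of_surjective hsurj
    _ ≤ Module.finrank K (Fin n → K) := Submodule.finrank_le _
    _ = n := by simp

theorem hh2_ge [FiniteDimensional K A] {n : ℕ} (Λ : (A →ₗ[K] A →ₗ[K] A) →ₗ[K] (Fin n → K))
    (h : ∀ f, (∃ h : A →ₗ[K] A, ∀ a b, f a b = a * h b - h (a * b) + h a * b) → Λ f = 0)
    (hs : ∀ v, ∃ f ∈ hZ K A, Λ f = v) :
    n ≤ Module.finrank K (HH2 K A) := by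
  obtain ⟨q, h1, h2⟩ := hh2_pres (K := K) (A := A)
  let L := Λ ∘ₗ (hZ K A).subtype
  have hk : LinearMap.ker q ≤ LinearMap.ker L := fun f hf => h f.1 ((h2 f).1 hf)
  have hfin : Module.Finite K (hZ K A) := inferInstance
  have hfin2 : Module.Finite K (HH2 K A) := Module.Finite.of_surjective q h1
  obtain ⟨t, ht⟩ := q.exists_rightInverse_of_surjective (LinearMap.range_eq_top.2 h1)
  have hsurj : Function.Surjective (L ∘ₗ t) := by
    intro v
    obtain ⟨f, hf, rfl⟩ := hs v
    refine ⟨q ⟨f, hf⟩, ?_⟩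
    have h4 : q (t (q ⟨f, hf⟩)) = q ⟨f, hf⟩ := LinearMap.congr_fun ht _
    have h5 : q (t (q ⟨f, hf⟩) + (-1 : K) • ⟨f, hf⟩) = 0 := by
      rw [map_add, map_smul, h4, neg_one_smul, add_neg_cancel]
    have h6 : L (t (q ⟨f, hf⟩) + (-1 : K) • ⟨f, hf⟩) = 0 := hk h5
    rw [map_add, map_smul, neg_one_smul, add_neg_eq_zero] at h6
    exact h6
  have := LinearMap.finrank_le_finrank_of_surjective hsurj
  simpa using this
end Hoch

section Pres

/-- The path algebra relations. -/
structure PathRels {A : Type} [Ring A] (g : QGen → A) : Prop where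
  vmul : ∀ v w, IsVertex v → IsVertex w → g v * g w = if v = w then g v else 0
  vsum : g e1 + g e2 + g e3 + g e4 = 1
  smul : ∀ a, IsArrow a → g (src a) * g a = g a
  mult : ∀ a, IsArrow a → g a * g (tgt a) = g a
  orth1 : ∀ v a, IsVertex v → IsArrow a → v ≠ src a → g v * g a = 0
  orth2 : ∀ a v, IsArrow a → IsVertex v → v ≠ tgt a → g a * g v = 0

/-- All relations, `κ = false` for `A₁` and `κ = true` for `A₂`. -/
structure Rels (κ : Bool) {A : Type} [Ring A] (g : QGen → A) : Prop extends PathRels g where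
  r1 : g α * g β = if κ then g α * g δ * g γ * g β else 0
  r2 : g ξ * g ε = 0
  r3 : g γ * g δ = 0
  r4 : g β * g α + g δ * g γ + g ε * g ξ = 0
  r5 : g α * g β * g α = 0
  r6 : g β * g α * g β = 0

/-- Presentation of an algebra. -/
structure Pres (K : Type) [Field K] (κ : Bool) (A : Type) [Ring A] [Algebra K A] (g : QGen → A) : Prop
    extends Rels κ g where
  lift : ∀ (B : Type) [Ring B] [Algebra K B] (g' : QGen → B), Rels κ g' →
    ∃ φ : A →ₐ[K] B, ∀ x, φ (g x) = g' x
  gene : ∀ S : Subalgebra K A, (∀ x, g x ∈ S) → S = ⊤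

variable {K : Type} [Field K]

lemma pathRels_gen : PathRels (gen K) := by
  have key : ∀ x y, PathRel K x y → RingQuot.mkAlgHom K (PathRel K) x = RingQuot.mkAlgHom K (PathRel K) y :=
    fun x y h => RingQuot.mkAlgHom_rel K h
  refine ⟨fun v w hv hw => ?_, ?_, fun a ha => ?_, fun a ha => ?_, fun v a hv ha h => ?_, fun a v ha hv h => ?_⟩
  · have := key _ _ (PathRel.vertex_mul v w hv hw)
    rw [map_mul] at this
    unfold gen; rw [this]; split_ifs <;> simp
  · have := key _ _ (PathRel.vertex_sum)
    rwa [map_add, map_add, map_add, map_one] at this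
  · have := key _ _ (PathRel.src_mul a ha)
    rwa [map_mul] at this
  · have := key _ _ (PathRel.mul_tgt a ha)
    rwa [map_mul] at this
  · have := key _ _ (PathRel.orth_mul v a hv ha h)
    rwa [map_mul, map_zero] at this
  · have := key _ _ (PathRel.mul_orth a v ha hv h)
    rwa [map_mul, map_zero] at this

lemma pathAlg_lift (B : Type) [Ring B] [Algebra K B] (g : QGen → B) (h : PathRels g) :
    ∃ φ : PathAlg K →ₐ[K] B, ∀ x, φ (gen K x) = g x := by
  refine ⟨RingQuot.liftAlgHom K ⟨FreeAlgebra.lift K g, ?_⟩, fun x => ?_⟩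
  · intro x y hxy
    induction hxy with
    | vertex_mul v w hv hw =>
      have := h.vmul v w hv hw
      simp only [map_mul, FreeAlgebra.lift_ι_apply, this]; split_ifs <;> simp
    | vertex_sum => simpa using h.vsum
    | src_mul a ha => simpa using h.smul a ha
    | mul_tgt a ha => simpa using h.mult a ha
    | orth_mul v a hv ha hh => simpa using h.orth1 v a hv ha hh
    | mul_orth a v ha hv hh => simpa using h.orth2 a v ha hv hh
  · unfold gen
    rw [RingQuot.liftAlgHom_mkAlgHom_apply, FreeAlgebra.lift_ι_apply]

lemma pathAlg_gene (S : Subalgebra K (PathAlg K)) (h : ∀ x, gen K x ∈ S) : S = ⊤ := by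
  rw [eq_top_iff]
  rintro y -
  obtain ⟨z, rfl⟩ := RingQuot.mkAlgHom_surjective K (PathRel K) y
  induction z using FreeAlgebra.induction with
  | grade0 r => rw [AlgHom.commutes]; exact S.algebraMap_mem r
  | grade1 x => exact h x
  | mul a b ha hb => rw [map_mul]; exact S.mul_mem ha hb
  | add a b ha hb => rw [map_add]; exact S.add_mem ha hb

section
variable (J : TwoSidedIdeal (PathAlg K)) [Algebra K J.ringCon.Quotient]
  (hJ : ∀ k : K, algebraMap K J.ringCon.Quotient k = RingCon.mk' J.ringCon (algebraMap K (PathAlg K) k))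

/-- The quotient map as an algebra map. -/
def quoMap : PathAlg K →ₐ[K] J.ringCon.Quotient :=
  { RingCon.mk' J.ringCon with commutes' := fun k => (hJ k).symm }

lemma quoMap_surj : Function.Surjective (quoMap J hJ) := RingCon.mk'_surjective _

lemma quoMap_zero (x : PathAlg K) : quoMap J hJ x = 0 ↔ x ∈ J := by
  change (x : J.ringCon.Quotient) = ((0 : PathAlg K) : J.ringCon.Quotient) ↔ _
  rw [RingCon.eq]; exact (TwoSidedIdeal.mem_iff J x).symm

lemma quo_lift (B : Type) [Ring B] [Algebra K B] (φ : PathAlg K →ₐ[K] B) (h : ∀ x ∈ J, φ x = 0) :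
    ∃ ψ : J.ringCon.Quotient →ₐ[K] B, ∀ x, ψ (quoMap J hJ x) = φ x := by
  have hle : J.ringCon ≤ RingCon.ker φ.toRingHom := by
    intro x y hxy
    have : x - y ∈ J := by rwa [← TwoSidedIdeal.rel_iff]
    have := h _ this
    rw [map_sub, sub_eq_zero] at this
    exact this
  refine ⟨{ RingCon.lift J.ringCon φ.toRingHom hle with commutes' := fun k => ?_ }, fun x => rfl⟩
  rw [hJ]
  exact φ.commutes k
end

lemma span_zero {B : Type} [Ring B] [Algebra K B] (φ : PathAlg K →ₐ[K] B) (s : Set (PathAlg K))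
    (h : ∀ x ∈ s, φ x = 0) : ∀ x ∈ TwoSidedIdeal.span s, φ x = 0 := by
  intro x hx
  have : TwoSidedIdeal.span s ≤ TwoSidedIdeal.ker φ := by
    rw [TwoSidedIdeal.span_le]
    intro y hy
    exact (TwoSidedIdeal.mem_ker φ).2 (h y hy)
  exact (TwoSidedIdeal.mem_ker φ).1 (this hx)

lemma pathRels_map {A B : Type} [Ring A] [Ring B] (φ : A →+* B) (g : QGen → A) (h : PathRels g) :
    PathRels (fun x => φ (g x)) where
  vmul v w hv hw := by rw [← map_mul, h.vmul v w hv hw]; split_ifs <;> simp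
  vsum := by rw [← map_add, ← map_add, ← map_add, h.vsum, map_one]
  smul a ha := by rw [← map_mul, h.smul a ha]
  mult a ha := by rw [← map_mul, h.mult a ha]
  orth1 v a hv ha hh := by rw [← map_mul, h.orth1 v a hv ha hh, map_zero]
  orth2 a v ha hv hh := by rw [← map_mul, h.orth2 a v ha hv hh, map_zero]

lemma quo_gene (J : TwoSidedIdeal (PathAlg K)) [Algebra K J.ringCon.Quotient]
    (hJ : ∀ k : K, algebraMap K J.ringCon.Quotient k = RingCon.mk' J.ringCon (algebraMap K (PathAlg K) k))
    (S : Subalgebra K J.ringCon.Quotient) (h : ∀ x, quoMap J hJ (gen K x) ∈ S) : S = ⊤ := by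
  have := pathAlg_gene (S.comap (quoMap J hJ)) h
  rw [eq_top_iff]
  rintro y -
  obtain ⟨z, rfl⟩ := quoMap_surj J hJ y
  have hz : z ∈ S.comap (quoMap J hJ) := by rw [this]; trivial
  exact hz

/-- Generators of `A₁`. -/
noncomputable def g1 (K : Type) [Field K] (x : QGen) : AlgA1 K := quoMap (idealA1 K) (fun _ => rfl) (gen K x)
/-- Generators of `A₂`. -/
noncomputable def g2 (K : Type) [Field K] (x : QGen) : AlgA2 K := quoMap (idealA2 K) (fun _ => rfl) (gen K x)

lemma pres1 : Pres K false (AlgA1 K) (g1 K) := by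
  have key : ∀ x ∈ ({gen K .α * gen K .β,
     gen K .ξ * gen K .ε,
     gen K .γ * gen K .δ,
     gen K .β * gen K .α + gen K .δ * gen K .γ + gen K .ε * gen K .ξ} : Set (PathAlg K)),
     quoMap (idealA1 K) (fun _ => rfl) x = 0 := fun x hx =>
      (quoMap_zero (idealA1 K) (fun _ => rfl) x).2 (TwoSidedIdeal.subset_span hx)
  have h1 := key (gen K .α * gen K .β) (by simp)
  have h2 := key (gen K .ξ * gen K .ε) (by simp)
  have h3 := key (gen K .γ * gen K .δ) (by simp)
  have h4 := key (gen K .β * gen K .α + gen K .δ * gen K .γ + gen K .ε * gen K .ξ) (by simp)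
  simp only [map_mul, map_add] at h1 h2 h3 h4
  refine { toPathRels := pathRels_map (quoMap (idealA1 K) (fun _ => rfl)).toRingHom _ pathRels_gen,
           r1 := h1, r2 := h2, r3 := h3, r4 := h4, r5 := ?_, r6 := ?_, lift := ?_, gene := ?_ }
  · unfold g1; rw [h1, zero_mul]
  · unfold g1; rw [mul_assoc, h1, mul_zero]
  · intro B _ _ g' hg
    obtain ⟨φ, hφ⟩ := pathAlg_lift (K := K) B g' hg.toPathRels
    obtain ⟨ψ, hψ⟩ := quo_lift (idealA1 K) (fun _ => rfl) B φ (by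
      apply span_zero
      have := hg.r1; have := hg.r2; have := hg.r3; have := hg.r4
      rintro x (rfl | rfl | rfl | rfl) <;> simp_all)
    exact ⟨ψ, fun x => (hψ _).trans (hφ x)⟩
  · exact fun S h => quo_gene _ _ S h

lemma pres2 : Pres K true (AlgA2 K) (g2 K) := by
  have key : ∀ x ∈ ({gen K .α * gen K .β - gen K .α * gen K .δ * gen K .γ * gen K .β,
     gen K .ξ * gen K .ε,
     gen K .γ * gen K .δ,
     gen K .β * gen K .α + gen K .δ * gen K .γ + gen K .ε * gen K .ξ,
     gen K .α * gen K .β * gen K .α,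
     gen K .β * gen K .α * gen K .β} : Set (PathAlg K)),
     quoMap (idealA2 K) (fun _ => rfl) x = 0 := fun x hx =>
      (quoMap_zero (idealA2 K) (fun _ => rfl) x).2 (TwoSidedIdeal.subset_span hx)
  have h1 := key (gen K .α * gen K .β - gen K .α * gen K .δ * gen K .γ * gen K .β) (by simp)
  have h2 := key (gen K .ξ * gen K .ε) (by simp)
  have h3 := key (gen K .γ * gen K .δ) (by simp)
  have h4 := key (gen K .β * gen K .α + gen K .δ * gen K .γ + gen K .ε * gen K .ξ) (by simp)
  have h5 := key (gen K .α * gen K .β * gen K .α) (by simp)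
  have h6 := key (gen K .β * gen K .α * gen K .β) (by simp)
  simp only [map_mul, map_add, map_sub] at h1 h2 h3 h4 h5 h6
  refine { toPathRels := pathRels_map (quoMap (idealA2 K) (fun _ => rfl)).toRingHom _ pathRels_gen,
           r1 := sub_eq_zero.1 h1, r2 := h2, r3 := h3, r4 := h4, r5 := h5, r6 := h6, lift := ?_, gene := ?_ }
  · intro B _ _ g' hg
    obtain ⟨φ, hφ⟩ := pathAlg_lift (K := K) B g' hg.toPathRels
    obtain ⟨ψ, hψ⟩ := quo_lift (idealA2 K) (fun _ => rfl) B φ (by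
      apply span_zero
      have := hg.r1; have := hg.r2; have := hg.r3; have := hg.r4; have := hg.r5; have := hg.r6
      rintro x (rfl | rfl | rfl | rfl | rfl | rfl) <;> simp_all)
    exact ⟨ψ, fun x => (hψ _).trans (hφ x)⟩
  · exact fun S h => quo_gene _ _ S h

end Pres

section Basis

/-- The basis words. -/
def wd (i : Fin 28) : List QGen :=
  [[e1],
   [e2],
   [e3],
   [e4],
   [α],
   [ξ],
   [γ],
   [β],
   [δ],
   [ε],
   [α, δ],
   [α, ε],
   [ξ, β],
   [ξ, δ],
   [γ, β],
   [γ, ε],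
   [δ, γ],
   [ε, ξ],
   [α, ε, ξ],
   [ξ, δ, γ],
   [γ, ε, ξ],
   [δ, γ, ε],
   [ε, ξ, β],
   [ε, ξ, δ],
   [α, ε, ξ, β],
   [ξ, δ, γ, ε],
   [γ, ε, ξ, δ],
   [ε, ξ, δ, γ]].getD i []

/-- Left multiplication tables of `A₁` (sparse). -/
def tab : QGen → List (Fin 28 × List (Fin 28))
  | e1 => [(0, [0]), (4, [4]), (10, [10]), (11, [11]), (18, [18]), (24, [24])]
  | e2 => [(1, [1]), (5, [5]), (12, [12]), (13, [13]), (19, [19]), (25, [25])]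
  | e3 => [(2, [2]), (6, [6]), (14, [14]), (15, [15]), (20, [20]), (26, [26])]
  | e4 => [(3, [3]), (7, [7]), (8, [8]), (9, [9]), (16, [16]), (17, [17]), (21, [21]), (22, [22]), (23, [23]), (27, [27])]
  | α => [(3, [4]), (8, [10]), (9, [11]), (16, [18]), (17, [18]), (22, [24])]
  | β => [(0, [7]), (4, [16, 17]), (10, [23]), (11, [21]), (18, [27])]
  | γ => [(3, [6]), (7, [14]), (9, [15]), (17, [20]), (23, [26])]
  | δ => [(2, [8]), (6, [16]), (14, [22]), (15, [21]), (20, [27])]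
  | ε => [(1, [9]), (5, [17]), (12, [22]), (13, [23]), (19, [27])]
  | ξ => [(3, [5]), (7, [12]), (8, [13]), (16, [19]), (21, [25])]

/-- Left multiplication tables. -/
def T0 (κ : Bool) (x : QGen) (i : Fin 28) : List (Fin 28) :=
  if κ = true ∧ x = α ∧ i = 7 then [24] else ((tab x).lookup i).getD []

/-- Sum of a family over a list. -/
def lsum {ι M : Type} [AddCommMonoid M] (w : ι → M) (L : List ι) : M := (L.map w).sum

/-- Cancel equal pairs. -/
def norm2 : List (Fin 28) → List (Fin 28)
  | [] => []
  | a :: L => if a ∈ norm2 L then (norm2 L).erase a else a :: norm2 L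

section
variable {M N : Type} [AddCommGroup M] [AddCommGroup N] (w : Fin 28 → M)

lemma lsum_nil : lsum w [] = 0 := rfl

lemma lsum_cons (a : Fin 28) (L : List (Fin 28)) : lsum w (a :: L) = w a + lsum w L := by
  simp [lsum]

lemma lsum_append (L L' : List (Fin 28)) : lsum w (L ++ L') = lsum w L + lsum w L' := by
  simp [lsum]

lemma lsum_norm2 (h2 : ∀ m : M, m + m = 0) (L : List (Fin 28)) : lsum w (norm2 L) = lsum w L := by
  induction L with
  | nil => rfl
  | cons a L ih =>
    rw [lsum_cons, ← ih, norm2]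
    split_ifs with h
    · have : lsum w (norm2 L) = w a + lsum w ((norm2 L).erase a) := by
        rw [← lsum_cons]; exact ((List.perm_cons_erase h).map w).sum_eq
      rw [this, ← add_assoc, h2, zero_add]
    · rw [lsum_cons]

lemma lsum_congr2 (h2 : ∀ m : M, m + m = 0) {L L' : List (Fin 28)} (h : norm2 (L ++ L') = []) :
    lsum w L = lsum w L' := by
  have := lsum_norm2 w h2 (L ++ L')
  rw [h, lsum_append, lsum_nil] at this
  have h3 := h2 (lsum w L')
  rw [← h3] at this
  exact (add_right_cancel this).symm

lemma map_lsum (φ : M →+ N) (w' : Fin 28 → N) (T : Fin 28 → List (Fin 28))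
    (h : ∀ i, φ (w i) = lsum w' (T i)) (L : List (Fin 28)) : φ (lsum w L) = lsum w' (L.flatMap T) := by
  induction L with
  | nil => simp [lsum]
  | cons a L ih => rw [lsum_cons, map_add, ih, List.flatMap_cons, lsum_append, h]
end

/-- All generators. -/
def allG : List QGen := [e1, e2, e3, e4, α, β, γ, δ, ε, ξ]

lemma mem_allG (x : QGen) : x ∈ allG := by cases x <;> decide

instance decV (x : QGen) : Decidable (IsVertex x) := by unfold IsVertex; infer_instance
instance decA (x : QGen) : Decidable (IsArrow x) := by unfold IsArrow; infer_instance

variable {K : Type} [Field K] [CharP K 2]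

lemma self_add {M : Type} [AddCommGroup M] [Module K M] (m : M) : m + m = 0 := by
  have : (2 : K) = 0 := CharTwo.two_eq_zero
  rw [← two_smul K, this, zero_smul]

/-- Operators given by tables. -/
noncomputable def op (K : Type) [Field K] (T : Fin 28 → List (Fin 28)) : Module.End K (Fin 28 → K) :=
  (Pi.basisFun K (Fin 28)).constr K (fun i => lsum (Pi.basisFun K (Fin 28)) (T i))

/-- Vectors given by lists. -/
noncomputable def vl (K : Type) [Field K] (L : List (Fin 28)) : Fin 28 → K := lsum (Pi.basisFun K (Fin 28)) L

lemma op_vl (T : Fin 28 → List (Fin 28)) (L : List (Fin 28)) : op K T (vl K L) = vl K (L.flatMap T) := by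
  refine map_lsum _ (op K T).toAddMonoidHom _ T (fun i => ?_) L
  exact (Pi.basisFun K (Fin 28)).constr_basis K _ i

lemma vl_congr {L L' : List (Fin 28)} (h : norm2 (L ++ L') = []) : vl K L = vl K L' :=
  lsum_congr2 _ (self_add (K := K)) h

lemma vl_single (i : Fin 28) : vl K [i] = Pi.basisFun K (Fin 28) i := by simp [vl, lsum]

lemma end_ext {φ ψ : Module.End K (Fin 28 → K)} (h : ∀ i, φ (vl K [i]) = ψ (vl K [i])) : φ = ψ := by
  refine (Pi.basisFun K (Fin 28)).ext fun i => ?_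
  rw [← vl_single]; exact h i

lemma rels_op (κ : Bool) : Rels κ (fun x => op K (T0 κ x)) where
  vmul v w hv hw := by
    refine end_ext fun i => ?_
    have : ∀ v ∈ allG, ∀ w ∈ allG, IsVertex v → IsVertex w → ∀ i,
       norm2 ((([i].flatMap (T0 κ w)).flatMap (T0 κ v)) ++ (if v = w then [i].flatMap (T0 κ v) else [])) = [] := by
      cases κ <;> decide +kernel
    have := vl_congr (K := K) (this v (mem_allG v) w (mem_allG w) hv hw i)
    rw [Module.End.mul_apply, op_vl, op_vl, this]
    split_ifs
    · rw [op_vl]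
    · rfl
  vsum := by
    refine end_ext fun i => ?_
    have : ∀ i, norm2 (((([i].flatMap (T0 κ e1)) ++ ([i].flatMap (T0 κ e2))) ++ ([i].flatMap (T0 κ e3))
      ++ ([i].flatMap (T0 κ e4))) ++ [i]) = [] := by
      cases κ <;> decide +kernel
    have := vl_congr (K := K) (this i)
    simp only [LinearMap.add_apply, op_vl]
    simp only [vl, lsum_append] at this ⊢
    exact this
  smul a ha := by
    refine end_ext fun i => ?_
    have : ∀ a ∈ allG, IsArrow a → ∀ i,
       norm2 ((([i].flatMap (T0 κ a)).flatMap (T0 κ (src a))) ++ ([i].flatMap (T0 κ a))) = [] := by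
      cases κ <;> decide +kernel
    have := vl_congr (K := K) (this a (mem_allG a) ha i)
    rw [Module.End.mul_apply, op_vl, op_vl, this]
  mult a ha := by
    refine end_ext fun i => ?_
    have : ∀ a ∈ allG, IsArrow a → ∀ i,
       norm2 ((([i].flatMap (T0 κ (tgt a))).flatMap (T0 κ a)) ++ ([i].flatMap (T0 κ a))) = [] := by
      cases κ <;> decide +kernel
    have := vl_congr (K := K) (this a (mem_allG a) ha i)
    rw [Module.End.mul_apply, op_vl, op_vl, op_vl, this]
  orth1 v a hv ha h := by
    refine end_ext fun i => ?_
    have : ∀ v ∈ allG, ∀ a ∈ allG, IsVertex v → IsArrow a → v ≠ src a → ∀ i,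
       norm2 ((([i].flatMap (T0 κ a)).flatMap (T0 κ v)) ++ []) = [] := by
      cases κ <;> decide +kernel
    have := vl_congr (K := K) (this v (mem_allG v) a (mem_allG a) hv ha h i)
    rw [Module.End.mul_apply, op_vl, op_vl, this]; rfl
  orth2 a v ha hv h := by
    refine end_ext fun i => ?_
    have : ∀ v ∈ allG, ∀ a ∈ allG, IsVertex v → IsArrow a → v ≠ tgt a → ∀ i,
       norm2 ((([i].flatMap (T0 κ v)).flatMap (T0 κ a)) ++ []) = [] := by
      cases κ <;> decide +kernel
    have := vl_congr (K := K) (this v (mem_allG v) a (mem_allG a) hv ha h i)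
    rw [Module.End.mul_apply, op_vl, op_vl, this]; rfl
  r1 := by
    refine end_ext fun i => ?_
    have : ∀ i, norm2 ((([i].flatMap (T0 κ β)).flatMap (T0 κ α)) ++
      if κ = true then (((([i].flatMap (T0 κ β)).flatMap (T0 κ γ)).flatMap (T0 κ δ)).flatMap (T0 κ α)) else []) = [] := by
      cases κ <;> decide +kernel
    have := vl_congr (K := K) (this i)
    rw [Module.End.mul_apply, op_vl, op_vl, this]
    split_ifs
    · simp only [Module.End.mul_apply, op_vl]
    · rfl
  r2 := by
    refine end_ext fun i => ?_
    have : ∀ i, norm2 ((([i].flatMap (T0 κ ε)).flatMap (T0 κ ξ)) ++ []) = [] := by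
      cases κ <;> decide +kernel
    have := vl_congr (K := K) (this i)
    rw [Module.End.mul_apply, op_vl, op_vl, this]; rfl
  r3 := by
    refine end_ext fun i => ?_
    have : ∀ i, norm2 ((([i].flatMap (T0 κ δ)).flatMap (T0 κ γ)) ++ []) = [] := by
      cases κ <;> decide +kernel
    have := vl_congr (K := K) (this i)
    rw [Module.End.mul_apply, op_vl, op_vl, this]; rfl
  r4 := by
    refine end_ext fun i => ?_
    have : ∀ i, norm2 (((([i].flatMap (T0 κ α)).flatMap (T0 κ β)) ++ (([i].flatMap (T0 κ γ)).flatMap (T0 κ δ))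
      ++ (([i].flatMap (T0 κ ξ)).flatMap (T0 κ ε))) ++ []) = [] := by
      cases κ <;> decide +kernel
    have := vl_congr (K := K) (this i)
    simp only [LinearMap.add_apply, Module.End.mul_apply, op_vl]
    simp only [vl, lsum_append] at this ⊢
    exact this
  r5 := by
    refine end_ext fun i => ?_
    have : ∀ i, norm2 (((([i].flatMap (T0 κ α)).flatMap (T0 κ β)).flatMap (T0 κ α)) ++ []) = [] := by
      cases κ <;> decide +kernel
    have := vl_congr (K := K) (this i)
    rw [Module.End.mul_apply, Module.End.mul_apply, op_vl, op_vl, op_vl, this]; rfl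
  r6 := by
    refine end_ext fun i => ?_
    have : ∀ i, norm2 (((([i].flatMap (T0 κ β)).flatMap (T0 κ α)).flatMap (T0 κ β)) ++ []) = [] := by
      cases κ <;> decide +kernel
    have := vl_congr (K := K) (this i)
    rw [Module.End.mul_apply, Module.End.mul_apply, op_vl, op_vl, op_vl, this]; rfl

end Basis

section Words
variable {A : Type} [Ring A] {κ : Bool} {g : QGen → A}

/-- Basis words in an algebra. -/
def wrd (g : QGen → A) (i : Fin 28) : A := ((wd i).map g).prod

lemma PathRels.nc (h : PathRels g) {p q : QGen} (hpq : tgt p ≠ src q) : g p * g q = 0 := by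
  have h1 : g p = g p * g (tgt p) := by
    by_cases hp : IsVertex p
    · have : tgt p = p := by rcases hp with rfl | rfl | rfl | rfl <;> rfl
      rw [this, h.vmul p p hp hp, if_pos rfl]
    · exact (h.mult p (by cases p <;> first | exact absurd (by decide) hp | decide)).symm
  have h2 : g q = g (src q) * g q := by
    by_cases hp : IsVertex q
    · have : src q = q := by rcases hp with rfl | rfl | rfl | rfl <;> rfl
      rw [this, h.vmul q q hp hp, if_pos rfl]
    · exact (h.smul q (by cases q <;> first | exact absurd (by decide) hp | decide)).symm
  rw [h1, h2, mul_assoc, ← mul_assoc (g (tgt p)), h.vmul _ _ (by cases p <;> decide) (by cases q <;> decide),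
    if_neg hpq]
  simp

lemma PathRels.nc2 (h : PathRels g) {p q : QGen} (hpq : tgt p ≠ src q) (y : A) : g p * (g q * y) = 0 := by
  rw [← mul_assoc, h.nc hpq, zero_mul]

lemma PathRels.lu (h : PathRels g) {p q : QGen} (hp : IsVertex p) (hpq : p = src q) : g p * g q = g q := by
  by_cases hq : IsVertex q
  · have : src q = q := by rcases hq with rfl | rfl | rfl | rfl <;> rfl
    rw [hpq, this, h.vmul q q hq hq, if_pos rfl]
  · rw [hpq]; exact h.smul q (by cases q <;> first | exact absurd (by decide) hq | decide)

lemma PathRels.lu2 (h : PathRels g) {p q : QGen} (hp : IsVertex p) (hpq : p = src q) (y : A) :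
    g p * (g q * y) = g q * y := by
  rw [← mul_assoc, h.lu hp hpq]

lemma PathRels.ru (h : PathRels g) {p q : QGen} (hp : IsVertex q) (hpq : tgt p = q) : g p * g q = g p := by
  by_cases hq : IsVertex p
  · have : tgt p = p := by rcases hq with rfl | rfl | rfl | rfl <;> rfl
    rw [← hpq, this, h.vmul p p hq hq, if_pos rfl]
  · rw [← hpq]; exact h.mult p (by cases p <;> first | exact absurd (by decide) hq | decide)

lemma PathRels.one_left (h : PathRels g) {q : QGen} : g (src q) * g q = g q :=
  h.lu (by cases q <;> decide) rfl

section
variable (h : Rels κ g) (h2 : ∀ m : A, m + m = 0)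

lemma Rels.ba (h : Rels κ g) (h2 : ∀ m : A, m + m = 0) : g β * g α = g δ * g γ + g ε * g ξ := by
  have := h.r4
  rw [add_assoc] at this
  rw [eq_neg_of_add_eq_zero_left this, neg_eq_of_add_eq_zero_left (h2 _)]

lemma Rels.xe2 (h : Rels κ g) (y : A) : g ξ * (g ε * y) = 0 := by rw [← mul_assoc, h.r2, zero_mul]
lemma Rels.cd2 (h : Rels κ g) (y : A) : g γ * (g δ * y) = 0 := by rw [← mul_assoc, h.r3, zero_mul]
lemma Rels.ba2 (h : Rels κ g) (h2 : ∀ m : A, m + m = 0) (y : A) :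
    g β * (g α * y) = g δ * (g γ * y) + g ε * (g ξ * y) := by
  rw [← mul_assoc, h.ba h2, add_mul, mul_assoc, mul_assoc]
lemma eq_of_add2 (h2 : ∀ m : A, m + m = 0) {x y : A} (h : x + y = 0) : x = y := by
  rw [eq_neg_of_add_eq_zero_left h, neg_eq_of_add_eq_zero_left (h2 _)]
lemma Rels.adc (h : Rels κ g) (h2 : ∀ m : A, m + m = 0) : g α * (g δ * g γ) = g α * (g ε * g ξ) := by
  have := h.r5
  rw [mul_assoc, h.ba h2, mul_add] at this
  exact eq_of_add2 h2 this
lemma Rels.adc2 (h : Rels κ g) (h2 : ∀ m : A, m + m = 0) (y : A) :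
    g α * (g δ * (g γ * y)) = g α * (g ε * (g ξ * y)) := by
  have := congrArg (· * y) (h.adc h2)
  simpa only [mul_assoc] using this
lemma Rels.dcb (h : Rels κ g) (h2 : ∀ m : A, m + m = 0) : g δ * (g γ * g β) = g ε * (g ξ * g β) := by
  have := h.r6
  rw [h.ba h2, add_mul, mul_assoc, mul_assoc] at this
  exact eq_of_add2 h2 this
lemma Rels.dcex (h : Rels κ g) (h2 : ∀ m : A, m + m = 0) :
    g δ * (g γ * (g ε * g ξ)) = g ε * (g ξ * (g δ * g γ)) := by
  have : (g β * g α) * (g β * g α) = 0 := by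
    rw [← mul_assoc, h.r6, zero_mul]
  rw [h.ba h2] at this
  simp only [add_mul, mul_add, mul_assoc, h.cd2, h.xe2, mul_zero, zero_add, add_zero] at this
  exact (eq_of_add2 h2 this).symm
lemma Rels.dcex2 (h : Rels κ g) (h2 : ∀ m : A, m + m = 0) (y : A) :
    g δ * (g γ * (g ε * (g ξ * y))) = g ε * (g ξ * (g δ * (g γ * y))) := by
  have := congrArg (· * y) (h.dcex h2)
  simpa only [mul_assoc] using this
lemma Rels.aexd (h : Rels κ g) (h2 : ∀ m : A, m + m = 0) : g α * (g ε * (g ξ * g δ)) = 0 := by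
  rw [← h.adc2 h2, h.r3]; simp
lemma Rels.aexd2 (h : Rels κ g) (h2 : ∀ m : A, m + m = 0) (y : A) : g α * (g ε * (g ξ * (g δ * y))) = 0 := by
  rw [← h.adc2 h2, h.cd2]; simp
lemma Rels.cexb (h : Rels κ g) (h2 : ∀ m : A, m + m = 0) : g γ * (g ε * (g ξ * g β)) = 0 := by
  rw [← h.dcb h2, h.cd2]
lemma Rels.cexdc (h : Rels κ g) (h2 : ∀ m : A, m + m = 0) : g γ * (g ε * (g ξ * (g δ * g γ))) = 0 := by
  rw [← h.dcex h2, h.cd2]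
lemma Rels.exdce (h : Rels κ g) (h2 : ∀ m : A, m + m = 0) : g ε * (g ξ * (g δ * (g γ * g ε))) = 0 := by
  rw [← h.dcex2 h2, h.r2]; simp
lemma Rels.ab (h : Rels κ g) (h2 : ∀ m : A, m + m = 0) :
    g α * g β = if κ then g α * (g ε * (g ξ * g β)) else 0 := by
  rw [h.r1]
  split_ifs
  · rw [mul_assoc, mul_assoc, h.adc2 h2]
  · rfl
end

set_option maxHeartbeats 4000000 in
lemma T0_mul (h : Rels κ g) (h2 : ∀ m : A, m + m = 0) (x : QGen) (i : Fin 28) :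
    g x * wrd g i = lsum (wrd g) (T0 κ x i) := by
  have hp := h.toPathRels
  cases x <;> fin_cases i <;>
    first
    | (simp [wrd, wd, T0, tab, lsum, List.lookup]; done)
    | (simp [wrd, wd, T0, tab, lsum, List.lookup]; rw [hp.nc (by decide)]; done)
    | (simp [wrd, wd, T0, tab, lsum, List.lookup]; rw [hp.nc2 (by decide)]; done)
    | (simp [wrd, wd, T0, tab, lsum, List.lookup]; rw [hp.lu (by decide) (by decide)]; done)
    | (simp [wrd, wd, T0, tab, lsum, List.lookup]; rw [hp.lu2 (by decide) (by decide)]; done)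
    | (simp [wrd, wd, T0, tab, lsum, List.lookup]; rw [hp.ru (by decide) (by decide)]; done)
    | (simp [wrd, wd, T0, tab, lsum, List.lookup, h.ba h2, h.ba2 h2, h.adc h2, h.adc2 h2, h.r2, h.r3, h.xe2, h.cd2,
        h.dcb h2, h.dcex h2, h.dcex2 h2, h.aexd h2, h.aexd2 h2, h.cexb h2, h.cexdc h2, h.exdce h2]; done)
    | (cases κ <;> simp [wrd, wd, T0, tab, lsum, List.lookup, h.ab h2]; done)

end Words

section PBasis
variable {K : Type} [Field K] [CharP K 2] {A : Type} [Ring A] [Algebra K A] {κ : Bool} {g : QGen → A}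

lemma Pres.exists_rep (P : Pres K κ A g) : ∃ ρ : A →ₐ[K] Module.End K (Fin 28 → K), ∀ x, ρ (g x) = op K (T0 κ x) :=
  P.lift _ _ (rels_op κ)

lemma rep_word (ρ : A →ₐ[K] Module.End K (Fin 28 → K)) (hρ : ∀ x, ρ (g x) = op K (T0 κ x)) (l : List QGen)
    (L : List (Fin 28)) :
    ρ ((l.map g).prod) (vl K L) = vl K (l.foldr (fun x L => L.flatMap (T0 κ x)) L) := by
  induction l with
  | nil => simp
  | cons x l ih =>
    rw [List.map_cons, List.prod_cons, map_mul, Module.End.mul_apply, ih, hρ, op_vl, List.foldr_cons]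

lemma rep_wrd (ρ : A →ₐ[K] Module.End K (Fin 28 → K)) (hρ : ∀ x, ρ (g x) = op K (T0 κ x)) (i : Fin 28) :
    ρ (wrd g i) (vl K [0, 1, 2, 3]) = Pi.basisFun K (Fin 28) i := by
  have : ∀ i, norm2 ((wd i).foldr (fun x L => L.flatMap (T0 κ x)) [0, 1, 2, 3] ++ [i]) = [] := by
    cases κ <;> decide +kernel
  rw [wrd, rep_word ρ hρ, vl_congr (this i), vl_single]

lemma Pres.li (P : Pres K κ A g) : LinearIndependent K (wrd g) := by
  obtain ⟨ρ, hρ⟩ := P.exists_rep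
  refine LinearIndependent.of_comp ((LinearMap.applyₗ (vl K [0, 1, 2, 3])).comp ρ.toLinearMap) ?_
  convert (Pi.basisFun K (Fin 28)).linearIndependent using 1
  funext i
  exact rep_wrd ρ hρ i

lemma Pres.span (P : Pres K κ A g) : ⊤ ≤ Submodule.span K (Set.range (wrd g)) := by
  have h2 : ∀ m : A, m + m = 0 := self_add (K := K)
  set S := Submodule.span K (Set.range (wrd g)) with hS
  have hw : ∀ i, wrd g i ∈ S := fun i => Submodule.subset_span ⟨i, rfl⟩
  have hl : ∀ L, lsum (wrd g) L ∈ S := by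
    intro L
    induction L with
    | nil => exact S.zero_mem
    | cons a L ih => rw [lsum_cons]; exact S.add_mem (hw a) ih
  have hone : (1 : A) ∈ S := by
    rw [← P.vsum]
    have e : ∀ x ∈ [(e1, (0 : Fin 28)), (e2, 1), (e3, 2), (e4, 3)], g x.1 ∈ S := by
      intro x hx
      have : g x.1 = wrd g x.2 := by
        fin_cases hx <;> simp [wrd, wd]
      rw [this]; exact hw _
    exact S.add_mem (S.add_mem (S.add_mem (e (e1, 0) (by simp)) (e (e2, 1) (by simp))) (e (e3, 2) (by simp))) (e (e4, 3) (by simp))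
  let U : Subalgebra K A :=
    { carrier := {a | ∀ s ∈ S, a * s ∈ S}
      mul_mem' := fun {a b} ha hb s hs => by rw [mul_assoc]; exact ha _ (hb _ hs)
      add_mem' := fun {a b} ha hb s hs => by rw [add_mul]; exact S.add_mem (ha _ hs) (hb _ hs)
      algebraMap_mem' := fun r s hs => by rw [← Algebra.smul_def]; exact S.smul_mem _ hs }
  have hU : U = ⊤ := P.gene U fun x s hs => by
    refine Submodule.span_induction (p := fun s _ => g x * s ∈ S) ?_ ?_ ?_ ?_ hs
    · rintro _ ⟨i, rfl⟩
      rw [T0_mul P.toRels h2]; exact hl _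
    · rw [mul_zero]; exact S.zero_mem
    · intro a b _ _ ha hb; rw [mul_add]; exact S.add_mem ha hb
    · intro r a _ ha; rw [mul_smul_comm]; exact S.smul_mem _ ha
  intro a _
  have : a ∈ U := by rw [hU]; trivial
  have := this 1 hone
  rwa [mul_one] at this

/-- The basis of words. -/
noncomputable def Pres.bas (P : Pres K κ A g) : Module.Basis (Fin 28) K A := Module.Basis.mk P.li P.span

lemma Pres.bas_apply (P : Pres K κ A g) (i : Fin 28) : P.bas i = wrd g i := Module.Basis.mk_apply _ _ i

lemma Pres.fd (P : Pres K κ A g) : FiniteDimensional K A := P.bas.finiteDimensional_of_finite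

/-- Multiplication table. -/
def Mt (κ : Bool) (i j : Fin 28) : List (Fin 28) := (wd i).foldr (fun x L => L.flatMap (T0 κ x)) [j]

lemma word_mul (h : Rels κ g) (h2 : ∀ m : A, m + m = 0) (l : List QGen) (L : List (Fin 28)) :
    (l.map g).prod * lsum (wrd g) L = lsum (wrd g) (l.foldr (fun x L => L.flatMap (T0 κ x)) L) := by
  induction l with
  | nil => simp
  | cons x l ih =>
    rw [List.map_cons, List.prod_cons, mul_assoc, ih, List.foldr_cons]
    exact map_lsum (wrd g) (AddMonoidHom.mulLeft (g x)) (wrd g) (T0 κ x) (T0_mul h h2 x) _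

lemma wrd_mul (h : Rels κ g) (h2 : ∀ m : A, m + m = 0) (i j : Fin 28) :
    wrd g i * wrd g j = lsum (wrd g) (Mt κ i j) := by
  have := word_mul h h2 (wd i) [j]
  simp only [lsum_cons, lsum_nil, add_zero] at this
  exact this

lemma lsum_mul (h : Rels κ g) (h2 : ∀ m : A, m + m = 0) (L : List (Fin 28)) (j : Fin 28) :
    lsum (wrd g) L * wrd g j = lsum (wrd g) (L.flatMap (fun i => Mt κ i j)) :=
  map_lsum (wrd g) (AddMonoidHom.mulRight (wrd g j)) (wrd g) (fun i => Mt κ i j) (fun i => wrd_mul h h2 i j) _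

lemma g_lsum (h : Rels κ g) (h2 : ∀ m : A, m + m = 0) (x : QGen) (L : List (Fin 28)) :
    g x * lsum (wrd g) L = lsum (wrd g) (L.flatMap (T0 κ x)) :=
  map_lsum (wrd g) (AddMonoidHom.mulLeft (g x)) (wrd g) (T0 κ x) (T0_mul h h2 x) _

end PBasis

section Lower

/-- First order deformations of the left multiplication (sparse). -/
def tab1 : Fin 3 → QGen → List (Fin 28 × List (Fin 28))
  | 0, α => [(7, [0]), (16, [4])]
  | 0, β => [(10, [8]), (11, [9]), (18, [17]), (24, [22])]
  | 0, γ => [(8, [2]), (16, [6]), (21, [15]), (27, [20])]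
  | 0, δ => [(14, [7]), (26, [23])]
  | 0, ε => [(25, [21])]
  | 0, ξ => [(9, [1]), (17, [5]), (22, [12]), (23, [13]), (27, [19])]
  | 1, α => [(16, [4]), (21, [11]), (23, [10]), (27, [18])]
  | 1, β => [(4, [3]), (10, [8]), (11, [9]), (18, [17])]
  | 1, γ => [(22, [14])]
  | 1, δ => [(14, [7])]
  | 2, α => [(7, [24])]
  | _, _ => []

/-- First order deformations of the left multiplication. -/
def T1 (k : Fin 3) (x : QGen) (i : Fin 28) : List (Fin 28) := ((tab1 k x).lookup i).getD []

/-- The cocycles on words. -/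
def Fl (k : Fin 3) (j : Fin 28) : List QGen → List (Fin 28)
  | [] => []
  | x :: l => (Fl k j l).flatMap (T0 false x) ++ (l.foldr (fun x L => L.flatMap (T0 false x)) [j]).flatMap (T1 k x)

/-- Index of a generator. -/
def gi : QGen → Fin 28
  | e1 => 0 | e2 => 1 | e3 => 2 | e4 => 3 | α => 4 | ξ => 5 | γ => 6 | β => 7 | δ => 8 | ε => 9

lemma wd_gi (x : QGen) : wd (gi x) = [x] := by cases x <;> rfl

lemma coc_dec : ∀ k, ∀ x ∈ allG, ∀ i j,
    norm2 (((Fl k j (wd i)).flatMap (T0 false x) ++ (Mt false i j).flatMap (T1 k x)) ++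
      ((T0 false x i).flatMap (fun l => Fl k j (wd l)) ++ (T1 k x i).flatMap (fun l => Mt false l j))) = [] := by
  decide +kernel

lemma tau_dec : ∀ x ∈ allG, ∀ j, ((T0 false x j).filter (fun i => 24 ≤ i)).length =
    ((Mt false j (gi x)).filter (fun i => 24 ≤ i)).length := by
  decide +kernel

variable {K : Type} [Field K] {A : Type} [Ring A] [Algebra K A] {κ : Bool} {g : QGen → A}

lemma wrd_gi (g : QGen → A) (x : QGen) : wrd g (gi x) = g x := by simp [wrd, wd_gi]

lemma chi_rels (v : QGen) (hv : IsVertex v) : Rels κ (fun x => if x = v then (1 : K) else 0) := by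
  have hv' : ∀ a, IsArrow a → a ≠ v := by
    rintro a ha rfl
    revert hv ha
    cases a <;> decide
  have hA : ∀ a, IsArrow a → (if a = v then (1 : K) else 0) = 0 := fun a ha => if_neg (hv' a ha)
  have a1 := hA α (by decide)
  have a2 := hA β (by decide)
  have a3 := hA γ (by decide)
  have a4 := hA δ (by decide)
  have a5 := hA ε (by decide)
  have a6 := hA ξ (by decide)
  refine { vmul := ?_, vsum := ?_, smul := ?_, mult := ?_, orth1 := ?_, orth2 := ?_, r1 := ?_, r2 := ?_, r3 := ?_,
           r4 := ?_, r5 := ?_, r6 := ?_ }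
  · intro u w _ _
    by_cases h : u = w
    · subst h; simp
    · rw [if_neg h]
      by_cases h' : u = v
      · subst h'; rw [if_neg (Ne.symm h)]; simp
      · rw [if_neg h', zero_mul]
  · rcases hv with rfl | rfl | rfl | rfl <;> simp
  · intro a ha; simp only [hA a ha, mul_zero]
  · intro a ha; simp only [hA a ha, zero_mul]
  · intro u a _ ha _; simp only [hA a ha, mul_zero]
  · intro a u ha _ _; simp only [hA a ha, zero_mul]
  all_goals simp [a1, a2, a3, a4, a5, a6]

lemma Pres.exists_chi (P : Pres K κ A g) (v : QGen) (hv : IsVertex v) :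
    ∃ χ : A →ₐ[K] K, χ (g v) = 1 ∧ ∀ x, x ≠ v → χ (g x) = 0 := by
  obtain ⟨χ, h⟩ := P.lift K _ (chi_rels v hv)
  exact ⟨χ, by simp [h], fun x hx => by simp [h, hx]⟩

lemma Pres.ind [CharP K 2] (P : Pres K κ A g) {p : A → Prop} (hw : ∀ i, p (wrd g i)) (h0 : p 0)
    (ha : ∀ a b, p a → p b → p (a + b)) (hs : ∀ (r : K) a, p a → p (r • a)) (a : A) : p a :=
  Submodule.span_induction (p := fun s _ => p s) (by rintro _ ⟨i, rfl⟩; exact hw i) h0 (fun a b _ _ => ha a b)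
    (fun r a _ => hs r a) (P.span (Submodule.mem_top : a ∈ ⊤))

lemma coc_gene (P : Pres K κ A g) (f : A →ₗ[K] A →ₗ[K] A)
    (hg : ∀ x b c, g x * f b c + f (g x) (b * c) = f (g x * b) c + f (g x) b * c) : f ∈ hZ K A := by
  let U : Subalgebra K A :=
    { carrier := {a | ∀ b c, a * f b c + f a (b * c) = f (a * b) c + f a b * c}
      mul_mem' := fun {a a'} h h' b c => by
        have e1 := congrArg (a * ·) (h' b c)
        have e2 := h a' (b * c)
        have e3 := h (a' * b) c
        have e4 := congrArg (· * c) (h a' b)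
        simp only [mul_add, add_mul] at e1 e4
        simp only [mul_assoc] at e1 e2 e3 e4 ⊢
        rw [← sub_eq_zero] at e1 e2 e3 e4 ⊢
        have : a * (a' * f b c) + f (a * a') (b * c) - (f (a * (a' * b)) c + f (a * a') b * c) =
          (a * (a' * (f b) c) + a * (f a') (b * c) - (a * (f (a' * b)) c + a * ((f a') b * c)))
          - (a * (f a') (b * c) + (f a) (a' * (b * c)) - ((f (a * a')) (b * c) + (f a) a' * (b * c)))
          + (a * (f (a' * b)) c + (f a) (a' * (b * c)) - ((f (a * (a' * b))) c + (f a) (a' * b) * c))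
          + (a * ((f a') b * c) + (f a) (a' * b) * c - ((f (a * a')) b * c + (f a) a' * (b * c))) := by
          abel
        rw [this, e1, e2, e3, e4]; simp
      add_mem' := fun {a a'} h h' b c => by
        have e1 := h b c
        have e2 := h' b c
        simp only [add_mul, map_add, LinearMap.add_apply]
        rw [add_add_add_comm, e1, e2, add_add_add_comm]
      algebraMap_mem' := fun r b c => by
        have e : algebraMap K A r = r • (g e1 + g e2 + g e3 + g e4) := by
          rw [P.vsum, Algebra.smul_def, mul_one]
        rw [e]
        have h1 := hg e1 b c
        have h2 := hg e2 b c
        have h3 := hg e3 b c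
        have h4 := hg e4 b c
        simp only [map_smul, LinearMap.smul_apply, smul_mul_assoc, ← smul_add]
        congr 1
        simp only [add_mul, map_add, LinearMap.add_apply]
        rw [← sub_eq_zero] at h1 h2 h3 h4 ⊢
        have := congrArg₂ (· + ·) (congrArg₂ (· + ·) h1 h2) (congrArg₂ (· + ·) h3 h4)
        simp only [add_zero] at this
        rw [← this]; abel }
  have hU : U = ⊤ := P.gene U hg
  intro a
  have : a ∈ U := by rw [hU]; trivial
  exact this

variable [CharP K 2]

/-- The cocycles. -/
noncomputable def coc (P : Pres K false A g) (k : Fin 3) : A →ₗ[K] A →ₗ[K] A :=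
  P.bas.constr K (fun i => P.bas.constr K (fun j => lsum (wrd g) (Fl k j (wd i))))

lemma coc_wrd (P : Pres K false A g) (k : Fin 3) (i j : Fin 28) :
    coc P k (wrd g i) (wrd g j) = lsum (wrd g) (Fl k j (wd i)) := by
  rw [coc, ← P.bas_apply, ← P.bas_apply, Module.Basis.constr_basis, Module.Basis.constr_basis]

lemma coc_g (P : Pres K false A g) (k : Fin 3) (x : QGen) (j : Fin 28) :
    coc P k (g x) (wrd g j) = lsum (wrd g) (T1 k x j) := by
  rw [← wrd_gi g x, coc_wrd, wd_gi]
  simp [Fl]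

lemma coc_mem (P : Pres K false A g) (k : Fin 3) : coc P k ∈ hZ K A := by
  have h2 : ∀ m : A, m + m = 0 := self_add (K := K)
  refine coc_gene P _ fun x b c => ?_
  refine P.ind (p := fun b => g x * coc P k b c + coc P k (g x) (b * c) = coc P k (g x * b) c + coc P k (g x) b * c)
    (fun i => ?_) ?_ ?_ ?_ b
  · refine P.ind (p := fun c => g x * coc P k (wrd g i) c + coc P k (g x) (wrd g i * c)
        = coc P k (g x * wrd g i) c + coc P k (g x) (wrd g i) * c) (fun j => ?_) ?_ ?_ ?_ c
    · rw [coc_wrd, g_lsum P.toRels h2, wrd_mul P.toRels h2, T0_mul P.toRels h2, coc_g, lsum_mul P.toRels h2]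
      have e1 : ∀ L, coc P k (g x) (lsum (wrd g) L) = lsum (wrd g) (L.flatMap (T1 k x)) := fun L =>
        map_lsum (wrd g) (coc P k (g x)).toAddMonoidHom (wrd g) (T1 k x) (coc_g P k x) L
      have e2 : ∀ L, coc P k (lsum (wrd g) L) (wrd g j) = lsum (wrd g) (L.flatMap (fun l => Fl k j (wd l))) := fun L =>
        map_lsum (wrd g) ((coc P k).flip (wrd g j)).toAddMonoidHom (wrd g) _ (fun i => coc_wrd P k i j) L
      rw [e1, e2, ← lsum_append, ← lsum_append]
      exact lsum_congr2 _ h2 (coc_dec k x (mem_allG x) i j)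
    · simp
    · intro c c' h h'
      simp only [mul_add, map_add]
      rw [add_add_add_comm, h, h', add_add_add_comm]
    · intro r c h
      simp only [mul_smul_comm, map_smul, ← smul_add, h]
  · simp
  · intro c c' h h'
    simp only [mul_add, add_mul, map_add, LinearMap.add_apply]
    rw [add_add_add_comm, h, h', add_add_add_comm]
  · intro r c h
    simp only [mul_smul_comm, smul_mul_assoc, map_smul, LinearMap.smul_apply, ← smul_add, h]

/-- The symmetrizing form. -/
noncomputable def tau (P : Pres K κ A g) : A →ₗ[K] K := P.bas.constr K (fun i => if 24 ≤ i then (1 : K) else 0)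

lemma tau_lsum (P : Pres K κ A g) (L : List (Fin 28)) :
    tau P (lsum (wrd g) L) = ((L.filter (fun i => 24 ≤ i)).length : K) := by
  induction L with
  | nil => simp [lsum]
  | cons a L ih =>
    rw [lsum_cons, map_add, ih, tau, ← P.bas_apply, Module.Basis.constr_basis, List.filter_cons]
    by_cases h : 24 ≤ a
    · simp [h, add_comm]
    · simp [h]

lemma tau_comm (P : Pres K false A g) (x : QGen) (y : A) : tau P (g x * y) = tau P (y * g x) := by
  have h2 : ∀ m : A, m + m = 0 := self_add (K := K)
  refine P.ind (p := fun y => tau P (g x * y) = tau P (y * g x)) (fun j => ?_) ?_ ?_ ?_ y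
  · rw [T0_mul P.toRels h2]
    conv_rhs => rw [← wrd_gi g x, wrd_mul P.toRels h2]
    rw [tau_lsum, tau_lsum, tau_dec x (mem_allG x) j]
  · simp
  · intro a b ha hb; rw [mul_add, add_mul, map_add, map_add, ha, hb]
  · intro r a ha; rw [mul_smul_comm, smul_mul_assoc, map_smul, map_smul, ha]

lemma coc_gg (P : Pres K false A g) (k : Fin 3) (x y : QGen) :
    coc P k (g x) (g y) = lsum (wrd g) (T1 k x (gi y)) := by
  conv_lhs => rw [← wrd_gi g y, coc_g]

theorem lower (P : Pres K false A g) : 3 ≤ Module.finrank K (HH2 K A) := by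
  have h2 : ∀ m : A, m + m = 0 := self_add (K := K)
  haveI := P.fd
  obtain ⟨χ3, h3, h3'⟩ := P.exists_chi e3 (by decide)
  obtain ⟨χ4, h4, h4'⟩ := P.exists_chi e4 (by decide)
  let ev : A → A → (A →ₗ[K] A →ₗ[K] A) →ₗ[K] A := fun a b =>
    (LinearMap.applyₗ b).comp (LinearMap.applyₗ a)
  have hev : ∀ a b f, ev a b f = f a b := fun a b f => rfl
  let Λ : (A →ₗ[K] A →ₗ[K] A) →ₗ[K] (Fin 3 → K) := LinearMap.pi
    ![χ3.toLinearMap.comp (ev (g γ) (g δ)),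
      χ4.toLinearMap.comp (ev (g β) (g α) + ev (g δ) (g γ) + ev (g ε) (g ξ)),
      (tau P).comp (ev (g α) (g β) + ev (g ξ) (g ε) + ev (g γ) (g δ) + (ev (g β) (g α) + ev (g δ) (g γ) + ev (g ε) (g ξ)))]
  have hΛ : ∀ f, Λ f = ![χ3 (f (g γ) (g δ)), χ4 (f (g β) (g α) + f (g δ) (g γ) + f (g ε) (g ξ)),
      tau P (f (g α) (g β) + f (g ξ) (g ε) + f (g γ) (g δ) + (f (g β) (g α) + f (g δ) (g γ) + f (g ε) (g ξ)))] := by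
    intro f
    funext i
    fin_cases i <;> rfl
  refine hh2_ge Λ ?_ ?_
  · rintro f ⟨h, hf⟩
    have r1 : g α * g β = 0 := P.r1
    have r4 : h (g β * g α) + h (g δ * g γ) + h (g ε * g ξ) = 0 := by
      rw [← map_add, ← map_add, P.r4, map_zero]
    have c1 := h3' γ (by decide)
    have c2 := h3' δ (by decide)
    have d1 := h4' α (by decide)
    have d2 := h4' β (by decide)
    have d3 := h4' γ (by decide)
    have d4 := h4' δ (by decide)
    have d5 := h4' ε (by decide)
    have d6 := h4' ξ (by decide)
    rw [hΛ]
    have a1 : χ3 (f (g γ) (g δ)) = 0 := by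
      rw [hf, P.r3]; simp [c1, c2]
    have a2 : χ4 (f (g β) (g α) + f (g δ) (g γ) + f (g ε) (g ξ)) = 0 := by
      have : χ4 (h (g β * g α) + h (g δ * g γ) + h (g ε * g ξ)) = 0 := by rw [r4, map_zero]
      rw [map_add, map_add] at this
      simp only [hf, map_add, map_sub, map_mul, d1, d2, d3, d4, d5, d6, zero_mul, mul_zero, zero_sub, add_zero]
      linear_combination - this
    have a3 : tau P (f (g α) (g β) + f (g ξ) (g ε) + f (g γ) (g δ) + (f (g β) (g α) + f (g δ) (g γ) + f (g ε) (g ξ))) = 0 := by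
      have : tau P (h (g β * g α) + h (g δ * g γ) + h (g ε * g ξ)) = 0 := by rw [r4, map_zero]
      rw [map_add, map_add] at this
      simp only [hf, r1, P.r2, P.r3, map_add, map_sub, map_zero]
      rw [tau_comm P α, tau_comm P β, tau_comm P γ, tau_comm P δ, tau_comm P ε, tau_comm P ξ]
      have t2 : (2 : K) = 0 := CharTwo.two_eq_zero
      linear_combination - this + (tau P (h (g α) * g β) + tau P (h (g β) * g α) + tau P (h (g γ) * g δ) +
        tau P (h (g δ) * g γ) + tau P (h (g ε) * g ξ) + tau P (h (g ξ) * g ε)) * t2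
    rw [a1, a2, a3]
    funext i; fin_cases i <;> rfl
  · intro v
    refine ⟨v 0 • coc P 0 + v 1 • coc P 1 + v 2 • coc P 2,
      (hZ K A).add_mem ((hZ K A).add_mem ((hZ K A).smul_mem _ (coc_mem P 0)) ((hZ K A).smul_mem _ (coc_mem P 1)))
        ((hZ K A).smul_mem _ (coc_mem P 2)), ?_⟩
    rw [map_add, map_add, map_smul, map_smul, map_smul]
    have w1 : wrd g 2 = g e3 := wrd_gi g e3
    have w2 : wrd g 3 = g e4 := wrd_gi g e4
    have k1 : Λ (coc P 0) = ![1, 0, 0] := by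
      rw [hΛ]
      simp only [coc_gg, ← lsum_append, tau_lsum]
      simp [gi, T1, tab1, List.lookup, lsum, w1, w2, h3]
    have k2 : Λ (coc P 1) = ![0, 1, 0] := by
      rw [hΛ]
      simp only [coc_gg, ← lsum_append, tau_lsum]
      simp [gi, T1, tab1, List.lookup, lsum, w1, w2, h4]
    have k3 : Λ (coc P 2) = ![0, 0, 1] := by
      rw [hΛ]
      simp only [coc_gg, ← lsum_append, tau_lsum]
      simp [gi, T1, tab1, List.lookup, lsum]
    rw [k1, k2, k3]
    funext i; fin_cases i <;> simp
end Lower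

section SqZ
variable {K : Type} [Field K] {A : Type} [Ring A] [Algebra K A] {g : QGen → A}
  {E : Type} [Ring E] [Algebra K E]

/-- Square zero extensions. -/
structure SqZ (π : E →ₐ[K] A) (ι : A →ₗ[K] E) : Prop where
  surj : Function.Surjective π
  inj : Function.Injective ι
  pi_iota : ∀ m, π (ι m) = 0
  ker : ∀ x, π x = 0 → ∃ m, x = ι m
  hl : ∀ x m, x * ι m = ι (π x * m)
  hr : ∀ m x, ι m * x = ι (m * π x)

variable {π : E →ₐ[K] A} {ι : A →ₗ[K] E}

lemma SqZ.ii (S : SqZ π ι) (m n : A) : ι m * ι n = 0 := by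
  rw [S.hl, S.pi_iota, zero_mul, map_zero]

/-- A simplified criterion for the path algebra relations. -/
lemma pathRels_mk {G : QGen → E} (hv : ∀ v w, IsVertex v → IsVertex w → G v * G w = if v = w then G v else 0)
    (hs : G e1 + G e2 + G e3 + G e4 = 1) (h1 : ∀ a, IsArrow a → G (src a) * G a = G a)
    (h2 : ∀ a, IsArrow a → G a * G (tgt a) = G a) : PathRels G where
  vmul := hv
  vsum := hs
  smul := h1
  mult := h2
  orth1 v a hv' ha h := by
    rw [← h1 a ha, ← mul_assoc, hv _ _ hv' (by revert ha; cases a <;> decide), if_neg h, zero_mul]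
  orth2 a v ha hv' h := by
    rw [← h2 a ha, mul_assoc, hv _ _ (by revert ha; cases a <;> decide) hv', if_neg (Ne.symm h), mul_zero]

lemma SqZ.lift_path (S : SqZ π ι) (hg : PathRels g) : ∃ G : QGen → E, PathRels G ∧ ∀ x, π (G x) = g x := by
  let v : Fin 4 → QGen := ![e1, e2, e3, e4]
  have vinj : Function.Injective v := by decide
  have hvv : ∀ i, IsVertex (v i) := by decide
  have co : CompleteOrthogonalIdempotents (fun i => g (v i)) := by
    refine ⟨⟨fun i => ?_, fun i j hij => ?_⟩, ?_⟩
    · have := hg.vmul (v i) (v i) (hvv i) (hvv i)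
      rwa [if_pos rfl] at this
    · have := hg.vmul (v i) (v j) (hvv i) (hvv j)
      rwa [if_neg (fun h => hij (vinj h))] at this
    · rw [Fin.sum_univ_four]; exact hg.vsum
  obtain ⟨e', he', hpe⟩ := CompleteOrthogonalIdempotents.lift_of_isNilpotent_ker (π : E →+* A)
    (fun x hx => by
      obtain ⟨m, rfl⟩ := S.ker x hx
      exact ⟨2, by rw [pow_two, S.ii]⟩) co (fun i => by
        obtain ⟨y, hy⟩ := S.surj (g (v i))
        exact ⟨y, hy⟩)
  have hpe' : ∀ i, π (e' i) = g (v i) := fun i => congrFun hpe i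
  choose s hs using S.surj
  let V : QGen → E := fun x => match x with
    | e1 => e' 0 | e2 => e' 1 | e3 => e' 2 | e4 => e' 3 | _ => 0
  have hV : ∀ x, IsVertex x → π (V x) = g x := by
    rintro x (rfl | rfl | rfl | rfl)
    · exact hpe' 0
    · exact hpe' 1
    · exact hpe' 2
    · exact hpe' 3
  have hVV : ∀ u w, IsVertex u → IsVertex w → V u * V w = if u = w then V u else 0 := by
    have key := he'.toOrthogonalIdempotents.mul_eq
    rintro u w (rfl | rfl | rfl | rfl) (rfl | rfl | rfl | rfl) <;> simp [V, key]
  have hVs : V e1 + V e2 + V e3 + V e4 = 1 := by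
    have := he'.complete
    rwa [Fin.sum_univ_four] at this
  have hid : ∀ u, IsVertex u → V u * V u = V u := fun u hu => by rw [hVV u u hu hu, if_pos rfl]
  have hsv : ∀ x, IsVertex (src x) := by intro x; cases x <;> decide
  have htv : ∀ x, IsVertex (tgt x) := by intro x; cases x <;> decide
  let G : QGen → E := fun x => if IsVertex x then V x else V (src x) * s (g x) * V (tgt x)
  have hGv : ∀ x, IsVertex x → G x = V x := fun x hx => if_pos hx
  have hGa : ∀ x, IsArrow x → G x = V (src x) * s (g x) * V (tgt x) := fun x hx => by
    refine if_neg ?_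
    revert hx; cases x <;> decide
  refine ⟨G, pathRels_mk ?_ ?_ ?_ ?_, fun x => ?_⟩
  · intro u w hu hw
    rw [hGv u hu, hGv w hw]; exact hVV u w hu hw
  · rw [hGv _ (by decide), hGv _ (by decide), hGv _ (by decide), hGv _ (by decide)]; exact hVs
  · intro a ha
    rw [hGa a ha, hGv _ (hsv a), ← mul_assoc, ← mul_assoc, hid _ (hsv a)]
  · intro a ha
    rw [hGa a ha, hGv _ (htv a), mul_assoc, hid _ (htv a)]
  · by_cases hx : IsVertex x
    · rw [hGv x hx, hV x hx]
    · have ha : IsArrow x := by revert hx; cases x <;> decide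
      rw [hGa x ha, map_mul, map_mul, hs, hV _ (hsv x), hV _ (htv x), hg.smul x ha, hg.mult x ha]

/-- Corner spaces. -/
lemma Pres.corner [CharP K 2] {κ : Bool} (P : Pres K κ A g) (v : QGen) (T : Finset (Fin 28))
    (hT : ∀ i, ∀ l ∈ (T0 κ v i).flatMap (fun i => Mt κ i (gi v)), l ∈ T) (m : A) :
    ∃ c : Fin 28 → K, g v * m * g v = ∑ l ∈ T, c l • wrd g l := by
  classical
  have h2 : ∀ m : A, m + m = 0 := self_add (K := K)
  have hadd : ∀ c d : Fin 28 → K, ∑ l ∈ T, c l • wrd g l + ∑ l ∈ T, d l • wrd g l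
      = ∑ l ∈ T, (c + d) l • wrd g l := by
    intro c d
    rw [← Finset.sum_add_distrib]
    simp only [Pi.add_apply, add_smul]
  have hsm : ∀ (r : K) (c : Fin 28 → K), r • ∑ l ∈ T, c l • wrd g l
      = ∑ l ∈ T, (r • c) l • wrd g l := by
    intro r c
    rw [Finset.smul_sum]
    simp [mul_smul]
  have hz : ∑ l ∈ T, (0 : Fin 28 → K) l • wrd g l = 0 := by simp
  refine P.ind (p := fun m => ∃ c : Fin 28 → K, g v * m * g v = ∑ l ∈ T, c l • wrd g l)
    (fun i => ?_) ?_ ?_ ?_ m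
  · have e : g v * wrd g i * g v = lsum (wrd g) ((T0 κ v i).flatMap (fun i => Mt κ i (gi v))) := by
      rw [T0_mul P.toRels h2, ← lsum_mul P.toRels h2, wrd_gi]
    rw [e]
    have := hT i
    generalize (T0 κ v i).flatMap (fun i => Mt κ i (gi v)) = L at this
    induction L with
    | nil => exact ⟨0, hz.symm⟩
    | cons a L ih =>
      obtain ⟨c, hc⟩ := ih (fun l hl => this l (by simp [hl]))
      have ha : a ∈ T := this a (by simp)
      rw [lsum_cons, hc]
      have hd : ∑ l ∈ T, (Pi.single a (1 : K) : Fin 28 → K) l • wrd g l = wrd g a := by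
        rw [Finset.sum_eq_single a]
        · simp
        · intro b _ hb; simp [Pi.single_eq_of_ne hb]
        · exact fun h => absurd ha h
      exact ⟨Pi.single a 1 + c, by rw [← hadd, hd]⟩
  · exact ⟨0, by rw [mul_zero, zero_mul, hz]⟩
  · rintro a b ⟨c, hc⟩ ⟨d, hd⟩
    exact ⟨c + d, by rw [mul_add, add_mul, hc, hd, hadd]⟩
  · rintro r a ⟨c, hc⟩
    exact ⟨r • c, by rw [mul_smul_comm, smul_mul_assoc, hc, hsm]⟩

lemma Pres.corner1 [CharP K 2] {κ : Bool} (P : Pres K κ A g) (m : A) :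
    ∃ x z : K, g e1 * m * g e1 = x • g e1 + z • (g α * (g ε * (g ξ * g β))) := by
  obtain ⟨c, hc⟩ := P.corner e1 {0, 24} (by cases κ <;> decide +kernel) m
  refine ⟨c 0, c 24, hc.trans ?_⟩
  rw [Finset.sum_pair (by decide)]
  simp [wrd, wd]

lemma Pres.corner2 [CharP K 2] {κ : Bool} (P : Pres K κ A g) (m : A) :
    ∃ x z : K, g e2 * m * g e2 = x • g e2 + z • (g ξ * (g δ * (g γ * g ε))) := by
  obtain ⟨c, hc⟩ := P.corner e2 {1, 25} (by cases κ <;> decide +kernel) m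
  refine ⟨c 1, c 25, hc.trans ?_⟩
  rw [Finset.sum_pair (by decide)]
  simp [wrd, wd]

lemma Pres.corner3 [CharP K 2] {κ : Bool} (P : Pres K κ A g) (m : A) :
    ∃ x z : K, g e3 * m * g e3 = x • g e3 + z • (g γ * (g ε * (g ξ * g δ))) := by
  obtain ⟨c, hc⟩ := P.corner e3 {2, 26} (by cases κ <;> decide +kernel) m
  refine ⟨c 2, c 26, hc.trans ?_⟩
  rw [Finset.sum_pair (by decide)]
  simp [wrd, wd]

lemma Pres.corner4 [CharP K 2] {κ : Bool} (P : Pres K κ A g) (m : A) :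
    ∃ x p q z : K, g e4 * m * g e4 = x • g e4 + p • (g δ * g γ) + q • (g ε * g ξ)
      + z • (g ε * (g ξ * (g δ * g γ))) := by
  obtain ⟨c, hc⟩ := P.corner e4 {3, 16, 17, 27} (by cases κ <;> decide +kernel) m
  refine ⟨c 3, c 16, c 17, c 27, hc.trans ?_⟩
  rw [Finset.sum_insert (by decide), Finset.sum_insert (by decide), Finset.sum_pair (by decide)]
  simp [wrd, wd, add_assoc]

lemma SqZ.corner (S : SqZ π ι) (v : QGen) {G : QGen → E} (hG : ∀ x, π (G x) = g x) (x : E) (hx : π x = 0)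
    (hv : G v * x * G v = x) : ∃ m, x = ι (g v * m * g v) := by
  obtain ⟨m, rfl⟩ := S.ker x hx
  refine ⟨m, ?_⟩
  rw [← hv, S.hl, S.hr, hG]

lemma Pres.coord [CharP K 2] {κ : Bool} (P : Pres K κ A g) (i j : Fin 28) :
    P.bas.coord i (wrd g j) = if j = i then 1 else 0 := by
  rw [← P.bas_apply, Module.Basis.coord_apply, Module.Basis.repr_self, Finsupp.single_apply]

lemma Pres.ind4 [CharP K 2] {κ : Bool} (P : Pres K κ A g) (x p q z : K)
    (h : x • g e4 + p • (g δ * g γ) + q • (g ε * g ξ) + z • (g ε * (g ξ * (g δ * g γ))) = 0) :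
    x = 0 ∧ p = 0 ∧ q = 0 ∧ z = 0 := by
  have w3 : g e4 = wrd g 3 := by simp [wrd, wd]
  have w16 : g δ * g γ = wrd g 16 := by simp [wrd, wd]
  have w17 : g ε * g ξ = wrd g 17 := by simp [wrd, wd]
  have w27 : g ε * (g ξ * wrd g 16) = wrd g 27 := by simp [wrd, wd]
  rw [w3, w16, w17, w27] at h
  have k : ∀ i, P.bas.coord i (x • wrd g 3 + p • wrd g 16 + q • wrd g 17 + z • wrd g 27) = 0 := fun i => by
    rw [h, map_zero]
  simp only [map_add, map_smul, P.coord] at k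
  have k3 := k 3
  have k16 := k 16
  have k17 := k 17
  have k27 := k 27
  simp at k3 k16 k17 k27
  exact ⟨k3, k16, k17, k27⟩

lemma Pres.ind2 [CharP K 2] {κ : Bool} (P : Pres K κ A g) (x : K)
    (h : x • (g ξ * (g δ * (g γ * g ε))) = 0) : x = 0 := by
  have w : g ξ * (g δ * (g γ * g ε)) = wrd g 25 := by simp [wrd, wd]
  rw [w] at h
  have := congrArg (P.bas.coord 25) h
  simpa [P.coord] using this

lemma Pres.ind3 [CharP K 2] {κ : Bool} (P : Pres K κ A g) (x : K)
    (h : x • (g γ * (g ε * (g ξ * g δ))) = 0) : x = 0 := by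
  have w : g γ * (g ε * (g ξ * g δ)) = wrd g 26 := by simp [wrd, wd]
  rw [w] at h
  have := congrArg (P.bas.coord 26) h
  simpa [P.coord] using this

end SqZ

section Ring5

/-- The relations `αβα = 0 = βαβ` follow by nilpotency. -/
lemma nil_rel {E : Type} [Ring E] (h2 : ∀ m : E, m + m = 0) {al be ga de ep xi : E}
    (r1 : al * be = al * de * ga * be) (r2 : xi * ep = 0) (r3 : ga * de = 0)
    (r4 : be * al + de * ga + ep * xi = 0) (hn : (be * al) * (be * al) * ((be * al) * (be * al)) = 0) :
    al * be * al = 0 ∧ be * al * be = 0 := by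
  obtain ⟨a, ha⟩ : ∃ a, a = be * al := ⟨_, rfl⟩
  obtain ⟨b, hb⟩ : ∃ b, b = de * ga := ⟨_, rfl⟩
  obtain ⟨c, hc⟩ : ∃ c, c = ep * xi := ⟨_, rfl⟩
  have bb : b * b = 0 := by
    rw [hb, mul_assoc, ← mul_assoc ga, r3]; simp
  have cc : c * c = 0 := by
    rw [hc, mul_assoc, ← mul_assoc xi, r2]; simp
  rw [← ha, ← hb, ← hc] at r4
  rw [← ha] at hn
  have hac : c = a + b := (eq_of_add2 h2 r4).symm
  have aa : a * a = a * b + b * a := by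
    rw [hac] at cc
    simp only [add_mul, mul_add, bb, add_zero] at cc
    rw [add_assoc] at cc
    exact eq_of_add2 h2 (by rw [← cc]; abel)
  have r1' : al * be = al * b * be := by rw [r1, hb]; simp only [mul_assoc]
  have aba : a * a = a * b * a := by
    calc a * a = be * (al * be) * al := by rw [ha]; simp only [mul_assoc]
      _ = _ := by rw [r1', ha]; simp only [mul_assoc]
  have baba : b * a * b * a = b * a * b := by
    have e1 : b * (a * a) = b * a * b := by
      rw [aa, mul_add, ← mul_assoc, ← mul_assoc, bb, zero_mul, add_zero]
    calc b * a * b * a = b * (a * b * a) := by simp only [mul_assoc]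
      _ = b * (a * a) := by rw [← aba]
      _ = _ := e1
  have abab : a * a * b = b * a * b := by
    rw [aa, add_mul, mul_assoc, bb, mul_zero, zero_add]
  have bab : b * a * b = 0 := by
    calc b * a * b = b * a * b * a * a * a * a := by rw [baba, baba, baba, baba]
      _ = b * a * b * (a * a * (a * a)) := by simp only [mul_assoc]
      _ = 0 := by rw [hn, mul_zero]
  have aab : a * a * b = 0 := by rw [abab, bab]
  have aaa : a * a * a = 0 := by
    calc a * a * a = a * (a * a) := by rw [mul_assoc]
      _ = a * (a * b * a) := by rw [← aba]
      _ = a * a * b * a := by simp only [mul_assoc]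
      _ = 0 := by rw [aab, zero_mul]
  have a2 : a * a = 0 := by
    have : b * a = a * b + a * a := by
      rw [aa, ← add_assoc, h2, zero_add]
    rw [aba, mul_assoc, this, mul_add, ← mul_assoc, ← mul_assoc, aab, aaa, add_zero]
  have ab : a * b = b * a := eq_of_add2 h2 (by rw [← aa, a2])
  constructor
  · calc al * be * al = al * b * be * al := by rw [r1']
      _ = al * (b * a) := by rw [ha]; simp only [mul_assoc]
      _ = (al * be) * al * b := by rw [← ab, ha]; simp only [mul_assoc]
      _ = al * (b * a * b) := by rw [r1', ha]; simp only [mul_assoc]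
      _ = 0 := by rw [bab, mul_zero]
  · calc be * al * be = be * (al * b * be) := by rw [mul_assoc, r1']
      _ = (a * b) * be := by rw [ha]; simp only [mul_assoc]
      _ = b * be * (al * be) := by rw [ab, ha]; simp only [mul_assoc]
      _ = (b * a * b) * be := by rw [r1', ha]; simp only [mul_assoc]
      _ = 0 := by rw [bab, zero_mul]

end Ring5

section Obs
variable {K : Type} [Field K] [CharP K 2] {A : Type} [Ring A] [Algebra K A] {g : QGen → A}
  {E : Type} [Ring E] [Algebra K E] {π : E →ₐ[K] A} {ι : A →ₗ[K] E}

lemma Rels.dcb2 {κ : Bool} (h : Rels κ g) (h2 : ∀ m : A, m + m = 0) (y : A) :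
    g δ * (g γ * (g β * y)) = g ε * (g ξ * (g β * y)) := by
  have := congrArg (· * y) (h.dcb h2)
  simpa only [mul_assoc] using this
lemma Rels.cexb2 {κ : Bool} (h : Rels κ g) (h2 : ∀ m : A, m + m = 0) (y : A) :
    g γ * (g ε * (g ξ * (g β * y))) = 0 := by
  rw [← h.dcb2 h2, h.cd2]
lemma Rels.cexdc2 {κ : Bool} (h : Rels κ g) (h2 : ∀ m : A, m + m = 0) (y : A) :
    g γ * (g ε * (g ξ * (g δ * (g γ * y)))) = 0 := by
  rw [← h.dcex2 h2, h.cd2]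
lemma Rels.exdce2 {κ : Bool} (h : Rels κ g) (h2 : ∀ m : A, m + m = 0) (y : A) :
    g ε * (g ξ * (g δ * (g γ * (g ε * y)))) = 0 := by
  have := congrArg (· * y) (h.exdce h2)
  simpa only [mul_assoc, zero_mul] using this

lemma add2_of_eq (h2 : ∀ m : A, m + m = 0) {x y : A} (h : x = y) : x + y = 0 := by rw [h, h2]

/-- The vanishing of the idempotent parts of the first two relations. -/
lemma obs (P : Pres K true A g) (S : SqZ π ι) {G : QGen → E} (hG : PathRels G) (hπ : ∀ x, π (G x) = g x)
    {x1 z1 x2 z2 z3 p q z4 : K}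
    (R1 : G α * G β + G α * G δ * G γ * G β = ι (x1 • g e1 + z1 • (g α * (g ε * (g ξ * g β)))))
    (R2 : G ξ * G ε = ι (x2 • g e2 + z2 • (g ξ * (g δ * (g γ * g ε)))))
    (R3 : G γ * G δ = ι (z3 • (g γ * (g ε * (g ξ * g δ)))))
    (R4 : G β * G α + G δ * G γ + G ε * G ξ
      = ι (p • (g δ * g γ) + q • (g ε * g ξ) + z4 • (g ε * (g ξ * (g δ * g γ))))) : x1 = 0 ∧ x2 = 0 := by
  have h2 : ∀ m : A, m + m = 0 := self_add (K := K)
  have h2E : ∀ m : E, m + m = 0 := self_add (K := K)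
  have hR := P.toRels
  have hp := P.toPathRels
  have h2K : (2 : K) = 0 := CharTwo.two_eq_zero
  obtain ⟨a, ha⟩ : ∃ a, a = G β * G α := ⟨_, rfl⟩
  obtain ⟨b, hb⟩ : ∃ b, b = G δ * G γ := ⟨_, rfl⟩
  obtain ⟨c, hc⟩ : ∃ c, c = G ε * G ξ := ⟨_, rfl⟩
  have pa : π a = g δ * g γ + g ε * g ξ := by rw [ha, map_mul, hπ, hπ, hR.ba h2]
  have pb : π b = g δ * g γ := by rw [hb, map_mul, hπ, hπ]
  have pc : π c = g ε * g ξ := by rw [hc, map_mul, hπ, hπ]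
  have bb : b * b = 0 := by
    calc b * b = G δ * (G γ * G δ) * G γ := by rw [hb]; simp only [mul_assoc]
      _ = 0 := by
        rw [R3, S.hl, S.hr, hπ, hπ]
        simp only [mul_smul_comm, smul_mul_assoc, mul_assoc, hR.cexdc h2, smul_zero, mul_zero, map_zero]
  have cc : c * c = ι (x2 • (g ε * g ξ)) := by
    calc c * c = G ε * (G ξ * G ε) * G ξ := by rw [hc]; simp only [mul_assoc]
      _ = _ := by
        rw [R2, S.hl, S.hr, hπ, hπ]
        simp only [mul_smul_comm, smul_mul_assoc, mul_assoc, mul_add, add_mul, hR.exdce2 h2, smul_zero, mul_zero,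
          add_zero, hp.lu (p := e2) (q := ξ) (by decide) (by decide)]
  obtain ⟨N, hN⟩ : ∃ N, N = b * c + c * b := ⟨_, rfl⟩
  have R4' : a = b + c + ι (p • (g δ * g γ) + q • (g ε * g ξ) + z4 • (g ε * (g ξ * (g δ * g γ)))) := by
    rw [← R4, ← ha, ← hb, ← hc]
    have e1 := h2E b
    have e2 := h2E c
    calc a = a + (b + b) + (c + c) := by rw [e1, e2]; simp
      _ = _ := by abel
  have e4c : G e4 * b = b ∧ G e4 * c = c ∧ b * G e4 = b ∧ c * G e4 = c := by
    refine ⟨?_, ?_, ?_, ?_⟩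
    · rw [hb, ← mul_assoc, hG.lu (p := e4) (q := δ) (by decide) (by decide)]
    · rw [hc, ← mul_assoc, hG.lu (p := e4) (q := ε) (by decide) (by decide)]
    · rw [hb, mul_assoc, hG.ru (p := γ) (q := e4) (by decide) (by decide)]
    · rw [hc, mul_assoc, hG.ru (p := ξ) (q := e4) (by decide) (by decide)]
  have pN : π N = 0 := by
    rw [hN, map_add, map_mul, map_mul, pb, pc]
    simp only [mul_assoc, hR.dcex h2, h2]
  obtain ⟨n', hn'⟩ := S.corner e4 hπ N pN (by
    obtain ⟨k1, k2, k3, k4⟩ := e4c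
    rw [hN, mul_add, add_mul, ← mul_assoc, ← mul_assoc, k1, k2, mul_assoc, mul_assoc, k3, k4])
  obtain ⟨n0, n1, n2, n3, hn⟩ := P.corner4 n'
  rw [hn] at hn'
  have aa : a * a = ι (x2 • (g ε * g ξ)) + N := by
    rw [hN, ← cc]
    nth_rewrite 1 [R4']
    rw [R4']
    simp only [mul_add, add_mul]
    simp only [S.hl, S.hr, S.pi_iota, zero_mul, pb, pc, bb]
    simp only [mul_add, add_mul, map_add, map_smul, mul_smul_comm, smul_mul_assoc, mul_assoc, hR.cd2, hR.xe2, hR.dcex h2, hR.dcex2 h2,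
      hR.r3, hR.r2, mul_zero, smul_zero, map_zero, add_zero, zero_add]
    match_scalars <;> grind
  have ab : b * a = a * b + N := by
    rw [hN, R4']
    simp only [mul_add, add_mul]
    simp only [S.hl, S.hr, S.pi_iota, zero_mul, pb, pc, bb]
    simp only [mul_add, add_mul, map_add, map_smul, mul_smul_comm, smul_mul_assoc, mul_assoc, hR.cd2, hR.xe2, hR.dcex h2, hR.dcex2 h2,
      hR.r3, hR.r2, mul_zero, smul_zero, map_zero, add_zero, zero_add]
    match_scalars <;> grind
  have aba : a * b * a = ι ((x2 • (g ε * g ξ) + (n0 • g e4 + n1 • (g δ * g γ) + n2 • (g ε * g ξ)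
      + n3 • (g ε * (g ξ * (g δ * g γ))))) * (g δ * g γ) + (g δ * g γ + g ε * g ξ) * (n0 • g e4 + n1 • (g δ * g γ) + n2 • (g ε * g ξ)
      + n3 • (g ε * (g ξ * (g δ * g γ))))) := by
    rw [mul_assoc, ab, mul_add, ← mul_assoc, aa, hn', ← map_add, S.hr, S.hl, pa, pb, ← map_add]
  have aaba : a * a = a * b * a + ι (x1 • (g δ * g γ + g ε * g ξ)) := by
    have k1 : G α * G β = G α * G δ * G γ * G β + ι (x1 • g e1 + z1 • (g α * (g ε * (g ξ * g β)))) := by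
      rw [← R1, add_comm (G α * G β), ← add_assoc, h2E, zero_add]
    calc a * a = G β * (G α * G β) * G α := by rw [ha]; simp only [mul_assoc]
      _ = a * b * a + G β * ι (x1 • g e1 + z1 • (g α * (g ε * (g ξ * g β)))) * G α := by
        rw [k1, ha, hb]; simp only [mul_add, add_mul, mul_assoc]
      _ = _ := by
        congr 1
        rw [S.hl, S.hr, hπ, hπ]
        congr 1
        simp only [mul_smul_comm, smul_mul_assoc, mul_assoc, mul_add, add_mul, 
          hp.lu (p := e1) (q := α) (by decide) (by decide), hR.ba h2, hR.ba2 h2, hR.dcex2 h2, hR.dcex h2,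
          hR.xe2, hR.cd2, hR.r3, hR.r2, hR.exdce2 h2, mul_zero, smul_zero, add_zero]
  have key := aaba
  rw [aa, hn', aba, ← map_add, ← map_add] at key
  have key := S.inj key
  simp only [mul_smul_comm, smul_mul_assoc, mul_assoc, mul_add, add_mul, smul_add,
    hp.lu2 (p := e4) (q := δ) (by decide) (by decide),
    hp.ru (p := γ) (q := e4) (by decide) (by decide),
    hp.ru (p := ξ) (q := e4) (by decide) (by decide), hR.dcex2 h2, hR.dcex h2,
          hR.xe2, hR.cd2, hR.r3, hR.r2, hR.exdce2 h2, mul_zero, smul_zero, add_zero, zero_add] at key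
  obtain ⟨t0, t1, t2, t3⟩ := P.ind4 n0 (n0 + n0 + n1 + x1) (n0 + n2 + x2 + x1) (n1 + n2 + n2 + n3 + x2) (by
    refine Eq.trans ?_ (add2_of_eq h2 key)
    match_scalars <;> grind)
  have q1 : n1 = x1 := by grind
  have q2 : n2 = x1 + x2 := by grind
  have f2 : G ξ * N * G ε = 0 := by
    calc G ξ * N * G ε = G ξ * b * G ε * (G ξ * G ε) + (G ξ * G ε) * (G ξ * b * G ε) := by
          rw [hN, hc]; simp only [mul_add, add_mul, mul_assoc]
      _ = 0 := by
        rw [R2, S.hl, S.hr]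
        simp only [map_mul, hπ, pb, mul_add, add_mul, mul_smul_comm, smul_mul_assoc, mul_assoc,
          hp.ru (p := ε) (q := e2) (by decide) (by decide), hp.lu2 (p := e2) (q := ξ) (by decide) (by decide),
          hR.xe2, mul_zero, smul_zero, add_zero]
        exact h2E _
  have f3 : G γ * N * G δ = 0 := by
    calc G γ * N * G δ = (G γ * G δ) * (G γ * c * G δ) + G γ * c * G δ * (G γ * G δ) := by
          rw [hN, hb]; simp only [mul_add, add_mul, mul_assoc]
      _ = 0 := by
        rw [R3, S.hl, S.hr]
        simp only [map_mul, hπ, pc, mul_add, add_mul, mul_smul_comm, smul_mul_assoc, mul_assoc,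
          hR.cexdc2 h2, hR.cd2, mul_zero, smul_zero, add_zero, map_zero]
  rw [hn', S.hl, S.hr, hπ, hπ] at f2 f3
  have f2 := S.inj (f2.trans (map_zero ι).symm)
  have f3 := S.inj (f3.trans (map_zero ι).symm)
  simp only [mul_smul_comm, smul_mul_assoc, mul_assoc, mul_add, add_mul, hR.xe2, hR.cd2, hR.r2, hR.r3,
    hp.lu (p := e4) (q := ε) (by decide) (by decide), hp.lu (p := e4) (q := δ) (by decide) (by decide),
    hR.exdce h2, mul_zero, smul_zero, add_zero, zero_add] at f2 f3
  have g2 := P.ind2 _ f2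
  have g3 := P.ind3 _ f3
  constructor <;> grind

end Obs

section Split
variable {K : Type} [Field K] [CharP K 2] {A : Type} [Ring A] [Algebra K A] {g : QGen → A}
  {E : Type} [Ring E] [Algebra K E] {π : E →ₐ[K] A} {ι : A →ₗ[K] E}

/-- Lifts satisfying the four main relations give a splitting. -/
lemma split_exact (P : Pres K true A g) (S : SqZ π ι) {G : QGen → E} (hG : PathRels G) (hπ : ∀ x, π (G x) = g x)
    (R1 : G α * G β = G α * G δ * G γ * G β) (R2 : G ξ * G ε = 0) (R3 : G γ * G δ = 0)
    (R4 : G β * G α + G δ * G γ + G ε * G ξ = 0) : ∃ σ : A →ₐ[K] E, ∀ a, π (σ a) = a := by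
  have h2 : ∀ m : A, m + m = 0 := self_add (K := K)
  have h2E : ∀ m : E, m + m = 0 := self_add (K := K)
  have hR := P.toRels
  have hn : (G β * G α) * (G β * G α) * ((G β * G α) * (G β * G α)) = 0 := by
    have : π ((G β * G α) * (G β * G α)) = 0 := by
      simp only [map_mul, hπ, hR.ba h2, hR.ba2 h2, mul_add, add_mul, mul_assoc, hR.cd2, hR.xe2, hR.dcex h2,
        mul_zero, add_zero, zero_add, h2]
    obtain ⟨m, hm⟩ := S.ker _ this
    rw [hm, S.ii]
  obtain ⟨R5, R6⟩ := nil_rel h2E R1 R2 R3 R4 hn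
  obtain ⟨σ, hσ⟩ := P.lift E G ⟨hG, by simpa using R1, R2, R3, R4, R5, R6⟩
  refine ⟨σ, fun a => ?_⟩
  have := P.gene (AlgHom.equalizer (π.comp σ) (AlgHom.id K A)) (fun x => by
    rw [AlgHom.mem_equalizer]
    simp [hσ, hπ])
  have ha : a ∈ AlgHom.equalizer (π.comp σ) (AlgHom.id K A) := by rw [this]; trivial
  rw [AlgHom.mem_equalizer] at ha
  simpa using ha

/-- The corrected lifts. -/
def corr (g : QGen → A) (ι : A →ₗ[K] E) (G : QGen → E) (u u' v v' w w' : K) : QGen → E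
  | α => G α + ι (u • g α + u' • (g α * (g ε * g ξ)))
  | γ => G γ + ι (v • g γ + v' • (g γ * (g ε * g ξ)))
  | ε => G ε + ι (w • g ε + w' • (g δ * (g γ * g ε)))
  | x => G x

lemma corr_path (P : Pres K true A g) (S : SqZ π ι) {G : QGen → E} (hG : PathRels G) (hπ : ∀ x, π (G x) = g x)
    (u u' v v' w w' : K) : PathRels (corr g ι G u u' v v' w w') := by
  have hp := P.toPathRels
  have hv : ∀ x, IsVertex x → corr g ι G u u' v v' w w' x = G x := by
    rintro x (rfl | rfl | rfl | rfl) <;> rfl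
  refine pathRels_mk ?_ ?_ ?_ ?_
  · intro x y hx hy
    rw [hv x hx, hv y hy]; exact hG.vmul x y hx hy
  · exact hG.vsum
  · rintro x (rfl | rfl | rfl | rfl | rfl | rfl)
    · change G e1 * (G α + _) = _ + _
      rw [mul_add, S.hl, hπ, hG.lu (p := e1) (q := α) (by decide) (by decide)]
      simp only [mul_add, mul_smul_comm, hp.lu (p := e1) (q := α) (by decide) (by decide),
        hp.lu2 (p := e1) (q := α) (by decide) (by decide)]
    · exact hG.smul β (by decide)
    · change G e3 * (G γ + _) = _ + _
      rw [mul_add, S.hl, hπ, hG.lu (p := e3) (q := γ) (by decide) (by decide)]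
      simp only [mul_add, mul_smul_comm, hp.lu (p := e3) (q := γ) (by decide) (by decide),
        hp.lu2 (p := e3) (q := γ) (by decide) (by decide)]
    · exact hG.smul δ (by decide)
    · change G e4 * (G ε + _) = _ + _
      rw [mul_add, S.hl, hπ, hG.lu (p := e4) (q := ε) (by decide) (by decide)]
      simp only [mul_add, mul_smul_comm, hp.lu (p := e4) (q := ε) (by decide) (by decide),
        hp.lu2 (p := e4) (q := δ) (by decide) (by decide)]
    · exact hG.smul ξ (by decide)
  · rintro x (rfl | rfl | rfl | rfl | rfl | rfl)
    · change (G α + _) * G e4 = _ + _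
      rw [add_mul, S.hr, hπ, hG.ru (p := α) (q := e4) (by decide) (by decide)]
      simp only [add_mul, smul_mul_assoc, mul_assoc, hp.ru (p := α) (q := e4) (by decide) (by decide),
        hp.ru (p := ξ) (q := e4) (by decide) (by decide)]
    · exact hG.mult β (by decide)
    · change (G γ + _) * G e4 = _ + _
      rw [add_mul, S.hr, hπ, hG.ru (p := γ) (q := e4) (by decide) (by decide)]
      simp only [add_mul, smul_mul_assoc, mul_assoc, hp.ru (p := γ) (q := e4) (by decide) (by decide),
        hp.ru (p := ξ) (q := e4) (by decide) (by decide)]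
    · exact hG.mult δ (by decide)
    · change (G ε + _) * G e2 = _ + _
      rw [add_mul, S.hr, hπ, hG.ru (p := ε) (q := e2) (by decide) (by decide)]
      simp only [add_mul, smul_mul_assoc, mul_assoc, hp.ru (p := ε) (q := e2) (by decide) (by decide)]
    · exact hG.mult ξ (by decide)

lemma split_corr (P : Pres K true A g) (S : SqZ π ι) {G : QGen → E} (hG : PathRels G) (hπ : ∀ x, π (G x) = g x)
    {z1 z2 z3 p q z4 : K}
    (R1 : G α * G β + G α * G δ * G γ * G β = ι (z1 • (g α * (g ε * (g ξ * g β)))))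
    (R2 : G ξ * G ε = ι (z2 • (g ξ * (g δ * (g γ * g ε)))))
    (R3 : G γ * G δ = ι (z3 • (g γ * (g ε * (g ξ * g δ)))))
    (R4 : G β * G α + G δ * G γ + G ε * G ξ
      = ι (p • (g δ * g γ) + q • (g ε * g ξ) + z4 • (g ε * (g ξ * (g δ * g γ))))) :
    ∃ σ : A →ₐ[K] E, ∀ a, π (σ a) = a := by
  have h2 : ∀ m : A, m + m = 0 := self_add (K := K)
  have h2E : ∀ m : E, m + m = 0 := self_add (K := K)
  have h2K : (2 : K) = 0 := CharTwo.two_eq_zero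
  have hR := P.toRels
  have hab : g α * g β = g α * (g ε * (g ξ * g β)) := by simpa using hR.ab h2
  obtain ⟨u', hu'⟩ : ∃ u' : K, u' = z4 + z3 + z2 := ⟨_, rfl⟩
  obtain ⟨v, hv⟩ : ∃ v : K, v = z1 + u' := ⟨_, rfl⟩
  obtain ⟨u, hu⟩ : ∃ u : K, u = p + v := ⟨_, rfl⟩
  obtain ⟨w, hw⟩ : ∃ w : K, w = q + u := ⟨_, rfl⟩
  refine split_exact P S (corr_path P S hG hπ u u' v z3 w z2) ?_ ?_ ?_ ?_ ?_
  · intro x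
    cases x <;> simp [corr, hπ, S.pi_iota]
  · change (G α + ι (u • g α + u' • (g α * (g ε * g ξ)))) * G β =
      (G α + ι (u • g α + u' • (g α * (g ε * g ξ)))) * G δ * (G γ + ι (v • g γ + z3 • (g γ * (g ε * g ξ)))) * G β
    refine eq_of_add2 h2E ?_
    have key : (G α + ι (u • g α + u' • (g α * (g ε * g ξ)))) * G β +
      (G α + ι (u • g α + u' • (g α * (g ε * g ξ)))) * G δ * (G γ + ι (v • g γ + z3 • (g γ * (g ε * g ξ)))) * G β
      = (G α * G β + G α * G δ * G γ * G β) + ι ((u + u' + u + v) • (g α * (g ε * (g ξ * g β)))) := by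
      simp only [mul_add, add_mul]
      simp only [S.hl, S.hr, S.pi_iota, zero_mul, mul_zero, map_mul, hπ]
      simp only [mul_add, add_mul, map_add, map_smul, mul_smul_comm, smul_mul_assoc, mul_assoc, hR.cd2, hR.xe2,
        hR.adc2 h2, hab, hR.aexd2 h2, hR.cexb h2, mul_zero, smul_zero, map_zero, add_zero, zero_add]
      match_scalars <;> ring
    rw [key, R1, ← map_add, ← add_smul, show z1 + (u + u' + u + v) = 0 by grind, zero_smul, map_zero]
  · change G ξ * (G ε + ι (w • g ε + z2 • (g δ * (g γ * g ε)))) = 0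
    rw [mul_add, R2, S.hl, hπ, ← map_add]
    simp only [mul_add, mul_smul_comm, hR.r2, smul_zero, zero_add, h2, map_zero]
  · change (G γ + ι (v • g γ + z3 • (g γ * (g ε * g ξ)))) * G δ = 0
    rw [add_mul, R3, S.hr, hπ, ← map_add]
    simp only [add_mul, smul_mul_assoc, hR.r3, smul_zero, zero_add, mul_assoc, h2, map_zero]
  · change G β * (G α + ι (u • g α + u' • (g α * (g ε * g ξ)))) + G δ * (G γ + ι (v • g γ + z3 • (g γ * (g ε * g ξ))))
      + (G ε + ι (w • g ε + z2 • (g δ * (g γ * g ε)))) * G ξ = 0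
    have key : G β * (G α + ι (u • g α + u' • (g α * (g ε * g ξ)))) + G δ * (G γ + ι (v • g γ + z3 • (g γ * (g ε * g ξ))))
      + (G ε + ι (w • g ε + z2 • (g δ * (g γ * g ε)))) * G ξ = (G β * G α + G δ * G γ + G ε * G ξ)
       + ι ((u + v) • (g δ * g γ) + (u + w) • (g ε * g ξ) + (u' + z3 + z2) • (g ε * (g ξ * (g δ * g γ)))) := by
      simp only [mul_add, add_mul]
      simp only [S.hl, S.hr, S.pi_iota, zero_mul, mul_zero, map_mul, hπ]
      simp only [mul_add, add_mul, map_add, map_smul, mul_smul_comm, smul_mul_assoc, mul_assoc, hR.cd2, hR.xe2,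
        hR.ba h2, hR.ba2 h2, hR.dcex h2, mul_zero, smul_zero, map_zero, add_zero, zero_add]
      match_scalars <;> ring
    rw [key, R4, ← map_add, show u + v = p by grind, show u + w = q by grind, show u' + z3 + z2 = z4 by grind, h2, map_zero]

/-- The main splitting lemma. -/
lemma split_main (P : Pres K true A g) (S : SqZ π ι) (χ3 χ4 : A →ₐ[K] K) (h3 : χ3 (g e3) = 1)
    (h3' : ∀ x, x ≠ e3 → χ3 (g x) = 0) (h4 : χ4 (g e4) = 1) (h4' : ∀ x, x ≠ e4 → χ4 (g x) = 0)
    (c : QGen → E) (hc : ∀ x, π (c x) = g x) (m3 m4 : A) (c3 : c γ * c δ = ι m3)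
    (c4 : c β * c α + c δ * c γ + c ε * c ξ = ι m4) (x3 : χ3 m3 = 0) (x4 : χ4 m4 = 0) :
    ∃ σ : A →ₐ[K] E, ∀ a, π (σ a) = a := by
  have h2 : ∀ m : A, m + m = 0 := self_add (K := K)
  have hR := P.toRels
  obtain ⟨G, hG, hπ⟩ := S.lift_path P.toPathRels
  have hu : ∀ x, ∃ u, G x = c x + ι u := fun x => by
    obtain ⟨u, hu⟩ := S.ker (G x - c x) (by rw [map_sub, hπ, hc, sub_self])
    exact ⟨u, by rw [← hu]; abel⟩
  choose u hu using hu
  have mulG : ∀ x y, G x * G y = c x * c y + ι (g x * u y + u x * g y) := fun x y => by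
    rw [hu x, hu y, add_mul, mul_add, mul_add, S.ii, S.hl, S.hr, hc, hc, map_add]; abel
  have lG : ∀ {p q : QGen}, IsVertex p → p = src q → ∀ y, G p * (G q * y) = G q * y := fun h h' y => hG.lu2 h h' y
  obtain ⟨n1, k1⟩ := S.corner e1 hπ (G α * G β + G α * G δ * G γ * G β) (by
    simp only [map_add, map_mul, hπ]
    rw [hR.r1, if_pos rfl, h2]) (by
    simp only [mul_add, add_mul, mul_assoc, hG.ru (p := β) (q := e1) (by decide) (by decide),
      hG.lu2 (p := e1) (q := α) (by decide) (by decide)])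
  obtain ⟨n2, k2⟩ := S.corner e2 hπ (G ξ * G ε) (by simp only [map_mul, hπ, hR.r2]) (by
    simp only [mul_assoc, hG.ru (p := ε) (q := e2) (by decide) (by decide),
      hG.lu2 (p := e2) (q := ξ) (by decide) (by decide)])
  obtain ⟨n3, k3⟩ := S.corner e3 hπ (G γ * G δ) (by simp only [map_mul, hπ, hR.r3]) (by
    simp only [mul_assoc, hG.ru (p := δ) (q := e3) (by decide) (by decide),
      hG.lu2 (p := e3) (q := γ) (by decide) (by decide)])
  obtain ⟨n4, k4⟩ := S.corner e4 hπ (G β * G α + G δ * G γ + G ε * G ξ) (by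
    simp only [map_add, map_mul, hπ, hR.r4]) (by
    simp only [mul_add, add_mul, mul_assoc, hG.ru (p := α) (q := e4) (by decide) (by decide),
      hG.ru (p := γ) (q := e4) (by decide) (by decide), hG.ru (p := ξ) (q := e4) (by decide) (by decide),
      hG.lu2 (p := e4) (q := β) (by decide) (by decide), hG.lu2 (p := e4) (q := δ) (by decide) (by decide),
      hG.lu2 (p := e4) (q := ε) (by decide) (by decide)])
  obtain ⟨y1, z1, l1⟩ := P.corner1 n1
  obtain ⟨y2, z2, l2⟩ := P.corner2 n2
  obtain ⟨y3, z3, l3⟩ := P.corner3 n3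
  obtain ⟨y4, p, q, z4, l4⟩ := P.corner4 n4
  rw [l1] at k1
  rw [l2] at k2
  rw [l3] at k3
  rw [l4] at k4
  have t3 : y3 = 0 := by
    have e := k3
    rw [mulG, c3, ← map_add] at e
    have e := congrArg χ3 (S.inj e)
    simpa [x3, h3, h3' γ (by decide), h3' δ (by decide)] using e.symm
  have t4 : y4 = 0 := by
    have e := k4
    rw [mulG, mulG, mulG, add_add_add_comm (c β * c α), add_add_add_comm (c β * c α + c δ * c γ), c4, ← map_add, ← map_add, ← map_add] at e
    have e := congrArg χ4 (S.inj e)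
    simpa [x4, h4, h4' α (by decide), h4' β (by decide), h4' γ (by decide), h4' δ (by decide), h4' ε (by decide),
      h4' ξ (by decide)] using e.symm
  rw [t3, zero_smul, zero_add] at k3
  rw [t4, zero_smul, zero_add] at k4
  obtain ⟨t1, t2⟩ := obs P S hG hπ k1 k2 k3 k4
  rw [t1, zero_smul, zero_add] at k1
  rw [t2, zero_smul, zero_add] at k2
  exact split_corr P S hG hπ k1 k2 k3 k4

end Split

section Ext
variable {K : Type} [Field K] {A : Type} [Ring A] [Algebra K A]

/-- The underlying space of the square zero extension of `A` by the two-cocycle `f`. -/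
@[ext] structure Ef (f : A →ₗ[K] A →ₗ[K] A) : Type where
  fst : A
  snd : A

namespace Ef
variable {f : A →ₗ[K] A →ₗ[K] A}

instance : Zero (Ef f) := ⟨⟨0, 0⟩⟩
instance : Add (Ef f) := ⟨fun x y => ⟨x.fst + y.fst, x.snd + y.snd⟩⟩
instance : Neg (Ef f) := ⟨fun x => ⟨-x.fst, -x.snd⟩⟩
instance : Mul (Ef f) := ⟨fun x y => ⟨x.fst * y.fst, x.fst * y.snd + x.snd * y.fst + f x.fst y.fst⟩⟩
instance : One (Ef f) := ⟨⟨1, - f 1 1⟩⟩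
instance : SMul K (Ef f) := ⟨fun k x => ⟨k • x.fst, k • x.snd⟩⟩

lemma zero_fst : (0 : Ef f).fst = 0 := rfl
lemma zero_snd : (0 : Ef f).snd = 0 := rfl
lemma one_fst : (1 : Ef f).fst = 1 := rfl
lemma one_snd : (1 : Ef f).snd = - f 1 1 := rfl
lemma add_fst (x y : Ef f) : (x + y).fst = x.fst + y.fst := rfl
lemma add_snd (x y : Ef f) : (x + y).snd = x.snd + y.snd := rfl
lemma neg_fst (x : Ef f) : (-x).fst = -x.fst := rfl
lemma neg_snd (x : Ef f) : (-x).snd = -x.snd := rfl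
lemma mul_fst (x y : Ef f) : (x * y).fst = x.fst * y.fst := rfl
lemma mul_snd (x y : Ef f) : (x * y).snd = x.fst * y.snd + x.snd * y.fst + f x.fst y.fst := rfl
lemma smul_fst (k : K) (x : Ef f) : (k • x).fst = k • x.fst := rfl
lemma smul_snd (k : K) (x : Ef f) : (k • x).snd = k • x.snd := rfl

/-- The ring structure. -/
@[reducible] def ring (hf : f ∈ hZ K A) : Ring (Ef f) where
  add_assoc x y z := Ef.ext (add_assoc _ _ _) (add_assoc _ _ _)
  zero_add x := Ef.ext (zero_add _) (zero_add _)
  add_zero x := Ef.ext (add_zero _) (add_zero _)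
  add_comm x y := Ef.ext (add_comm _ _) (add_comm _ _)
  neg_add_cancel x := Ef.ext (neg_add_cancel _) (neg_add_cancel _)
  nsmul := nsmulRec
  zsmul := zsmulRec
  left_distrib x y z := Ef.ext (mul_add _ _ _) (by
    simp only [mul_snd, add_fst, add_snd, mul_add, map_add]; abel)
  right_distrib x y z := Ef.ext (add_mul _ _ _) (by
    simp only [mul_snd, add_fst, add_snd, add_mul, map_add, LinearMap.add_apply]; abel)
  zero_mul x := Ef.ext (zero_mul _) (by
    simp only [mul_snd, zero_fst, zero_snd, zero_mul, map_zero, LinearMap.zero_apply, add_zero])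
  mul_zero x := Ef.ext (mul_zero _) (by
    simp only [mul_snd, zero_fst, zero_snd, mul_zero, map_zero, add_zero])
  mul_assoc x y z := Ef.ext (mul_assoc _ _ _) (by
    simp only [mul_snd, mul_fst, mul_add, add_mul, mul_assoc]
    have := hf x.fst y.fst z.fst
    calc _ = x.fst * (y.fst * z.snd) + x.fst * (y.snd * z.fst) + x.snd * (y.fst * z.fst)
          + (f (x.fst * y.fst) z.fst + f x.fst y.fst * z.fst) := by abel
      _ = _ := by rw [← this]; abel)
  one_mul x := Ef.ext (one_mul _) (by
    have := hf 1 1 x.fst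
    simp only [one_mul, add_right_inj, add_left_inj] at this
    simp only [mul_snd, one_fst, one_snd, one_mul]
    rw [this]
    rw [neg_mul]; abel)
  mul_one x := Ef.ext (mul_one _) (by
    have := hf x.fst 1 1
    simp only [mul_one, add_right_inj, add_left_inj] at this
    simp only [mul_snd, one_fst, one_snd, mul_one]
    rw [← this, mul_neg]; abel)

/-- The algebra structure. -/
@[reducible] def algebra (hf : f ∈ hZ K A) : @Algebra K (Ef f) _ (ring hf).toSemiring :=
  letI := ring hf
  letI : Module K (Ef f) :=
    { one_smul := fun x => Ef.ext (one_smul _ _) (one_smul _ _)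
      mul_smul := fun a b x => Ef.ext (mul_smul _ _ _) (mul_smul _ _ _)
      smul_zero := fun a => Ef.ext (smul_zero _) (smul_zero _)
      zero_smul := fun x => Ef.ext (zero_smul _ _) (zero_smul _ _)
      smul_add := fun a x y => Ef.ext (smul_add _ _ _) (smul_add _ _ _)
      add_smul := fun a b x => Ef.ext (add_smul _ _ _) (add_smul _ _ _) }
  Algebra.ofModule
    (fun r x y => Ef.ext (smul_mul_assoc _ _ _) (by
      simp only [mul_snd, smul_fst, smul_snd, smul_add, smul_mul_assoc, map_smul, LinearMap.smul_apply]))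
    (fun r x y => Ef.ext (mul_smul_comm _ _ _) (by
      simp only [mul_snd, smul_fst, smul_snd, smul_add, mul_smul_comm, map_smul]))

end Ef

/-- Splitting criterion for cocycles through square zero extensions. -/
lemma coboundary_of_split [CharP K 2] (f : A →ₗ[K] A →ₗ[K] A) (hf : f ∈ hZ K A)
    (H : ∀ (E : Type) [Ring E] [Algebra K E] (π : E →ₐ[K] A) (ι : A →ₗ[K] E) (s : A → E), SqZ π ι →
      (∀ a, π (s a) = a) → (∀ a b, a * b = 0 → s a * s b = ι (f a b)) →
      (∀ a b a' b' a'' b'', a * b + a' * b' + a'' * b'' = 0 → s a * s b + s a' * s b' + s a'' * s b''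
        = ι (f a b + f a' b' + f a'' b'')) →
      ∃ σ : A →ₐ[K] E, ∀ a, π (σ a) = a) :
    ∃ h : A →ₗ[K] A, ∀ a b, f a b = a * h b - h (a * b) + h a * b := by
  letI := Ef.ring hf
  letI := Ef.algebra hf
  have h2 : ∀ m : A, m + m = 0 := self_add (K := K)
  let π : Ef f →ₐ[K] A := AlgHom.ofLinearMap
    { toFun := Ef.fst, map_add' := fun _ _ => rfl, map_smul' := fun _ _ => rfl } rfl (fun _ _ => rfl)
  let ι : A →ₗ[K] Ef f :=
    { toFun := fun a => ⟨0, a⟩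
      map_add' := fun a b => Ef.ext (add_zero _).symm rfl
      map_smul' := fun a b => Ef.ext (smul_zero _).symm rfl }
  obtain ⟨σ, hσ⟩ := H (Ef f) π ι (fun a => ⟨a, 0⟩)
    { surj := fun a => ⟨⟨a, 0⟩, rfl⟩
      inj := fun a b h => congrArg Ef.snd h
      pi_iota := fun _ => rfl
      ker := fun x hx => ⟨x.snd, Ef.ext hx rfl⟩
      hl := fun x m => Ef.ext (mul_zero _) (by
        change x.fst * m + x.snd * 0 + f x.fst 0 = x.fst * m
        simp)
      hr := fun m x => Ef.ext (zero_mul _) (by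
        change 0 * x.snd + m * x.fst + f 0 x.fst = m * x.fst
        simp) } (fun _ => rfl) (fun a b h => Ef.ext h (by
          change a * 0 + 0 * b + f a b = f a b
          simp)) (fun a b a' b' a'' b'' h => Ef.ext h (by
          change (a * 0 + 0 * b + f a b) + (a' * 0 + 0 * b' + f a' b') + (a'' * 0 + 0 * b'' + f a'' b'') = _
          simp only [mul_zero, zero_mul, zero_add]
          rfl))
  let h : A →ₗ[K] A :=
    { toFun := fun a => (σ a).snd
      map_add' := fun a b => by rw [map_add]; rfl
      map_smul' := fun k a => by rw [map_smul]; rfl }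
  refine ⟨h, fun a b => ?_⟩
  have e : h (a * b) = a * h b + h a * b + f a b := by
    have := congrArg Ef.snd (map_mul σ a b)
    rw [Ef.mul_snd] at this
    have ea : (σ a).fst = a := hσ a
    have eb : (σ b).fst = b := hσ b
    rw [ea, eb] at this
    exact this
  rw [e]
  calc f a b = - f a b := eq_neg_of_add_eq_zero_left (h2 (f a b))
    _ = _ := by abel

end Ext

section Upper
variable {K : Type} [Field K] [CharP K 2] {A : Type} [Ring A] [Algebra K A] {g : QGen → A}

theorem upper (P : Pres K true A g) : Module.finrank K (HH2 K A) ≤ 2 := by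
  haveI := P.fd
  obtain ⟨χ3, h3, h3'⟩ := P.exists_chi e3 (by decide)
  obtain ⟨χ4, h4, h4'⟩ := P.exists_chi e4 (by decide)
  let ev : A → A → (A →ₗ[K] A →ₗ[K] A) →ₗ[K] A := fun a b =>
    (LinearMap.applyₗ b).comp (LinearMap.applyₗ a)
  let Λ : (A →ₗ[K] A →ₗ[K] A) →ₗ[K] (Fin 2 → K) := LinearMap.pi
    ![χ3.toLinearMap.comp (ev (g γ) (g δ)),
      χ4.toLinearMap.comp (ev (g β) (g α) + ev (g δ) (g γ) + ev (g ε) (g ξ))]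
  have hΛ : ∀ f, Λ f = ![χ3 (f (g γ) (g δ)), χ4 (f (g β) (g α) + f (g δ) (g γ) + f (g ε) (g ξ))] := by
    intro f
    funext i
    fin_cases i <;> rfl
  refine hh2_le Λ fun f hf h0 => ?_
  rw [hΛ] at h0
  have x3 : χ3 (f (g γ) (g δ)) = 0 := congrFun h0 0
  have x4 : χ4 (f (g β) (g α) + f (g δ) (g γ) + f (g ε) (g ξ)) = 0 := congrFun h0 1
  refine coboundary_of_split f hf fun E _ _ π ι s S hs hm hm3 => ?_
  exact split_main P S χ3 χ4 h3 h3' h4 h4' (fun x => s (g x)) (fun x => hs _) _ _ (hm _ _ P.r3)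
    (hm3 _ _ _ _ _ _ P.r4) x3 x4

theorem finrank_ne : Module.finrank K (HH2 K (AlgA1 K)) ≠ Module.finrank K (HH2 K (AlgA2 K)) := by
  have l := lower (pres1 (K := K))
  have u := upper (pres2 (K := K))
  omega

end Upper

end Helper

/-- Over an algebraically closed field `K` of characteristic `2`, the
`K`-vector space dimensions of the second Hochschild cohomology groups of `A₁ = KQ/I′`
and `A₂ = KQ/I` differ: `dim_K HH²(A₁) ≠ dim_K HH²(A₂)`. -/
theorem finrank_HH2_A1_ne_finrank_HH2_A2 (K : Type) [Field K] [IsAlgClosed K] [CharP K 2] :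
    Module.finrank K (HH2 K (AlgA1 K)) ≠ Module.finrank K (HH2 K (AlgA2 K)) := by
  exact finrank_ne
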